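/- Theorem 1.1(i): Let v be a classical solution of v_t = v_rr + ((m−1)/r) v_r − (b(r,t)/r²) v on [0,R] × (t1,t2) which is not identically zero and satisfies the boundary condition (1.5). Then for every t ∈ (t1,t2) the zero number Z(v(·,t)) is finite. -/

import Mathlib

open Set Filter

/-!
The proof is a unique continuation argument for the parabolic operator with the singular potential
`b / r²`. At `r = 0` the potential forces `v = 0`, and the substitution `u = r ^ ((m - 1) / 2) v`
removes the first order term and leaves the potential `c / r²` with `c = (m² - 1) / 4 > 0`, up to
lower order terms. Measured in the backward Gaussian with pole `(r₀, T)`, let `H` be the squared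
norm of `u` and `D` its energy `∫ (u_r² + c u² / r²)`. Up to an exponential factor the parabolic
frequency `(T - t) D / H` decreases in time, so `H` decays at most polynomially in `T - t` as
`t → T`. Hence if `u` vanishes to infinite order at `(r₀, T)`, it is zero at all earlier times, and
then also at all later ones because `H` grows at most exponentially.

If `v(·, t)` has infinitely many zeros, they accumulate at some `r₀`, where by Rolle's theorem all
derivatives vanish, and hence `v = 0`. A solution that is nonzero at `r = R` is multiplied by
`R - r`: this changes the equation by lower order terms only, which are dominated by
`|w| / r + |w_r|` because the product `w` has a simple zero at `R`.
-/

/-- `f` is continuous and bounded on `s`. This class of integrands is closed under products and, on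
an open interval, allows quotients whose junk value at the endpoint must not matter. -/
@[fun_prop]
def ContBddOn {X : Type*} [TopologicalSpace X] (f : X → ℝ) (s : Set X) : Prop :=
  ContinuousOn f s ∧ ∃ M, ∀ x ∈ s, |f x| ≤ M

namespace ContBddOn

section Algebra

variable {X Y : Type*} [TopologicalSpace X] [TopologicalSpace Y] {f g : X → ℝ} {s t : Set X}

@[fun_prop]
theorem const (c : ℝ) : ContBddOn (fun _ : X => c) s :=
  ⟨continuousOn_const, |c|, fun _ _ => le_rfl⟩

@[fun_prop]
theorem add (hf : ContBddOn f s) (hg : ContBddOn g s) : ContBddOn (fun x => f x + g x) s := by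
  obtain ⟨cf, M, hM⟩ := hf
  obtain ⟨cg, N, hN⟩ := hg
  exact ⟨cf.add cg, M + N, fun x hx => (abs_add_le _ _).trans (add_le_add (hM x hx) (hN x hx))⟩

@[fun_prop]
theorem mul (hf : ContBddOn f s) (hg : ContBddOn g s) : ContBddOn (fun x => f x * g x) s := by
  obtain ⟨cf, M, hM⟩ := hf
  obtain ⟨cg, N, hN⟩ := hg
  refine ⟨cf.mul cg, M * N, fun x hx => ?_⟩
  rw [abs_mul]
  exact mul_le_mul (hM x hx) (hN x hx) (abs_nonneg _) ((abs_nonneg _).trans (hM x hx))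

@[fun_prop]
theorem neg (hf : ContBddOn f s) : ContBddOn (fun x => -f x) s := by
  simpa only [neg_one_mul] using (const (-1)).mul hf

@[fun_prop]
theorem sub (hf : ContBddOn f s) (hg : ContBddOn g s) : ContBddOn (fun x => f x - g x) s := by
  simpa only [sub_eq_add_neg] using hf.add hg.neg

@[fun_prop]
theorem pow (hf : ContBddOn f s) (n : ℕ) : ContBddOn (fun x => f x ^ n) s := by
  induction n with
  | zero => simpa only [pow_zero] using const 1
  | succ n ih => simpa only [pow_succ] using ih.mul hf

theorem congr (hf : ContBddOn f s) (h : EqOn g f s) : ContBddOn g s :=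
  ⟨hf.1.congr h, hf.2.imp fun _ hM x hx => (congrArg abs (h hx)).trans_le (hM x hx)⟩

theorem mono (hf : ContBddOn f t) (h : s ⊆ t) : ContBddOn f s :=
  ⟨hf.1.mono h, hf.2.imp fun _ hM x hx => hM x (h hx)⟩

theorem comp {φ : Y → X} {u : Set Y} (hf : ContBddOn f s) (hφ : ContinuousOn φ u)
    (h : MapsTo φ u s) : ContBddOn (fun y => f (φ y)) u :=
  ⟨hf.1.comp hφ h, hf.2.imp fun _ hM y hy => hM (φ y) (h hy)⟩

theorem of_isCompact (ht : IsCompact t) (hf : ContinuousOn f t) (h : s ⊆ t) : ContBddOn f s := by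
  obtain ⟨M, hM⟩ := ht.exists_bound_of_continuousOn hf
  exact ⟨hf.mono h, M, fun x hx => hM x (h hx)⟩

end Algebra

section Interval

variable {f : ℝ → ℝ}

theorem of_continuousOn_Icc {a b : ℝ} (hf : ContinuousOn f (Icc a b)) : ContBddOn f (Ioo a b) :=
  of_isCompact isCompact_Icc hf Ioo_subset_Icc_self

theorem intervalIntegrable {a b : ℝ} (hab : a ≤ b) (hf : ContBddOn f (Ioo a b)) :
    IntervalIntegrable f MeasureTheory.volume a b := by
  obtain ⟨cf, M, hM⟩ := hf
  rw [intervalIntegrable_iff_integrableOn_Ioo_of_le hab]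
  exact MeasureTheory.IntegrableOn.of_bound (by simp)
    (cf.aestronglyMeasurable measurableSet_Ioo) M
    (MeasureTheory.ae_restrict_of_forall_mem measurableSet_Ioo hM)

theorem integral_eq_sub {a b : ℝ} {F : ℝ → ℝ} (hab : a ≤ b) (hf : ContBddOn f (Ioo a b))
    (hF : ContinuousOn F (Icc a b)) (hd : ∀ r ∈ Ioo a b, HasDerivAt F (f r) r) :
    ∫ r in a..b, f r = F b - F a :=
  intervalIntegral.integral_eq_sub_of_hasDerivAt_of_le hab hF hd (hf.intervalIntegrable hab)

end Interval

end ContBddOn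

section Integrals

variable {R : ℝ} {f g h : ℝ → ℝ}

theorem integral_linearCombination (hR : 0 ≤ R) (hf : ContBddOn f (Ioo 0 R))
    (hg : ContBddOn g (Ioo 0 R)) (hh : ContBddOn h (Ioo 0 R)) (k l m : ℝ) :
    ∫ r in (0 : ℝ)..R, (k * f r + l * g r + m * h r) =
      k * (∫ r in (0 : ℝ)..R, f r) + l * (∫ r in (0 : ℝ)..R, g r) +
        m * ∫ r in (0 : ℝ)..R, h r := by
  have hkf := (hf.intervalIntegrable hR).const_mul k
  have hlg := (hg.intervalIntegrable hR).const_mul l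
  have hmh := (hh.intervalIntegrable hR).const_mul m
  rw [intervalIntegral.integral_add (hkf.add hlg) hmh, intervalIntegral.integral_add hkf hlg]
  simp only [intervalIntegral.integral_const_mul]

theorem integral_le_of_flux {F φ : ℝ → ℝ} (hR : 0 ≤ R) (hf : ContBddOn f (Ioo 0 R))
    (hg : ContBddOn g (Ioo 0 R)) (hφ : ContBddOn φ (Ioo 0 R)) (hF : ContinuousOn F (Icc 0 R))
    (hd : ∀ r ∈ Ioo 0 R, HasDerivAt F (φ r) r) (hFR : F R ≤ F 0)
    (hle : ∀ r ∈ Ioo 0 R, f r ≤ g r + φ r) :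
    ∫ r in (0 : ℝ)..R, f r ≤ ∫ r in (0 : ℝ)..R, g r := by
  have hmono := intervalIntegral.integral_mono_on_of_le_Ioo hR (hf.intervalIntegrable hR)
    ((hg.add hφ).intervalIntegrable hR) hle
  rw [intervalIntegral.integral_add (hg.intervalIntegrable hR) (hφ.intervalIntegrable hR),
    hφ.integral_eq_sub hR hF hd] at hmono
  linarith

theorem integral_eq_of_flux {F : ℝ → ℝ} (hR : 0 ≤ R) (hf : ContBddOn f (Ioo 0 R))
    (hg : ContBddOn g (Ioo 0 R)) (hF : ContinuousOn F (Icc 0 R))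
    (hd : ∀ r ∈ Ioo 0 R, HasDerivAt F (f r - g r) r) (hFR : F R = F 0) :
    ∫ r in (0 : ℝ)..R, f r = ∫ r in (0 : ℝ)..R, g r := by
  rw [← sub_eq_zero, ← intervalIntegral.integral_sub (hf.intervalIntegrable hR)
    (hg.intervalIntegrable hR), (hf.sub hg).integral_eq_sub hR hF hd, hFR, sub_self]

/-- The inner product of `L²((0, R), w(r) dr)`. -/
noncomputable def weightedInner (w : ℝ → ℝ) (R : ℝ) (f g : ℝ → ℝ) : ℝ :=
  ∫ r in (0 : ℝ)..R, f r * g r * w r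

variable {w : ℝ → ℝ}

theorem weightedInner_self_nonneg (hR : 0 ≤ R) (hw : ∀ r, 0 ≤ w r) :
    0 ≤ weightedInner w R f f :=
  intervalIntegral.integral_nonneg hR fun r _ => mul_nonneg (mul_self_nonneg _) (hw r)

theorem weightedInner_add_mul_self (hR : 0 ≤ R) (hw : ContBddOn w (Ioo 0 R))
    (hf : ContBddOn f (Ioo 0 R)) (hg : ContBddOn g (Ioo 0 R)) (x : ℝ) :
    weightedInner w R (fun r => f r + x * g r) (fun r => f r + x * g r) =
      weightedInner w R f f + 2 * x * weightedInner w R f g + x ^ 2 * weightedInner w R g g := by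
  have hlin := integral_linearCombination hR ((hf.mul hf).mul hw) ((hf.mul hg).mul hw)
    ((hg.mul hg).mul hw) 1 (2 * x) (x ^ 2)
  rw [one_mul] at hlin
  rw [weightedInner, weightedInner, weightedInner, weightedInner, ← hlin]
  congr 1 with r
  ring

theorem weightedInner_add_mul_right (hR : 0 ≤ R) (hw : ContBddOn w (Ioo 0 R))
    (hf : ContBddOn f (Ioo 0 R)) (hg : ContBddOn g (Ioo 0 R)) (hh : ContBddOn h (Ioo 0 R))
    (x : ℝ) :
    weightedInner w R f (fun r => g r + x * h r) =
      weightedInner w R f g + x * weightedInner w R f h := by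
  rw [weightedInner, weightedInner, weightedInner, ← intervalIntegral.integral_const_mul,
    ← intervalIntegral.integral_add (((hf.mul hg).mul hw).intervalIntegrable hR)
      ((((hf.mul hh).mul hw).intervalIntegrable hR).const_mul x)]
  congr 1 with r
  ring

theorem weightedInner_sq_le (hR : 0 ≤ R) (hw : ContBddOn w (Ioo 0 R)) (hw0 : ∀ r, 0 ≤ w r)
    (hf : ContBddOn f (Ioo 0 R)) (hg : ContBddOn g (Ioo 0 R)) :
    weightedInner w R f g ^ 2 ≤ weightedInner w R f f * weightedInner w R g g := by
  have hdiscrim := discrim_le_zero (a := weightedInner w R g g) (b := 2 * weightedInner w R f g)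
    (c := weightedInner w R f f) fun x => by
      have hx : 0 ≤ weightedInner w R (fun r => f r + x * g r) fun r => f r + x * g r :=
        weightedInner_self_nonneg hR hw0
      rw [weightedInner_add_mul_self hR hw hf hg] at hx
      linarith
  rw [discrim] at hdiscrim
  linarith

end Integrals

section Gaussian

/-- The Gaussian centred at `r₀` with inverse variance `α`. For `α = 1 / (2 (T - t))` it is, up to
normalisation, the backward heat kernel with pole `(r₀, T)`. -/
noncomputable def gaussianWeight (α r₀ r : ℝ) : ℝ := Real.exp (-(α / 2) * (r - r₀) ^ 2)

variable {α r₀ : ℝ}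

theorem gaussianWeight_pos (r : ℝ) : 0 < gaussianWeight α r₀ r := Real.exp_pos _

@[fun_prop]
theorem continuous_gaussianWeight : Continuous (gaussianWeight α r₀) := by
  unfold gaussianWeight
  fun_prop

@[fun_prop]
theorem contBddOn_gaussianWeight {R : ℝ} : ContBddOn (gaussianWeight α r₀) (Ioo 0 R) :=
  .of_continuousOn_Icc continuous_gaussianWeight.continuousOn

theorem hasDerivAt_gaussianWeight (r : ℝ) :
    HasDerivAt (gaussianWeight α r₀) (-(α * (r - r₀)) * gaussianWeight α r₀ r) r := by
  refine ((((hasDerivAt_id r).sub_const r₀).pow 2).const_mul (-(α / 2))).exp.congr_deriv ?_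
  simp only [gaussianWeight, Pi.pow_apply, id_eq, Nat.cast_ofNat, Nat.add_one_sub_one, pow_one]
  ring

theorem hasDerivAt_gaussianWeight_backward {T t : ℝ} (ht : t < T) (r : ℝ) :
    HasDerivAt (fun s => gaussianWeight (1 / (2 * (T - s))) r₀ r)
      (-(1 / (2 * (T - t)) * (r - r₀)) ^ 2 * gaussianWeight (1 / (2 * (T - t))) r₀ r) t := by
  have hT : T - t ≠ 0 := by linarith
  have hα : HasDerivAt (fun s => 1 / (2 * (T - s))) (2 * (1 / (2 * (T - t))) ^ 2) t := by
    refine ((hasDerivAt_const t (1 : ℝ)).div (((hasDerivAt_id t).const_sub T).const_mul 2)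
      (by simpa using hT)).congr_deriv ?_
    simp only [id_eq]
    field_simp
    ring
  refine ((hα.div_const 2).neg.mul_const ((r - r₀) ^ 2)).exp.congr_deriv ?_
  rw [gaussianWeight]
  simp only [Pi.neg_apply]
  ring

/-- The time derivative of the squared norm `∫ f² W` of a function evolving by `f_t = g`, where
`W` is the backward Gaussian weight, see `hasDerivAt_weightedInner_self`. -/
noncomputable def gaussianNormSqDeriv (α r₀ R : ℝ) (f g : ℝ → ℝ) : ℝ :=
  ∫ r in (0 : ℝ)..R, (2 * (f r * g r) - (α * (r - r₀) * f r) ^ 2) * gaussianWeight α r₀ r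

end Gaussian

section Slice

/-- One time slice of a function `u = r e` that vanishes on the lateral boundary of
`[0, R] × (τ₁, τ₂)`, with `u_r = p`, `u_rr = p'`, `u_t = r f`, `u_rt = q`, and that satisfies
`|u_t - u_rr + c u / r²|² ≤ Λ (u_r² + c (u / r)²)`. Working with `e = u / r` rather than with `u`
makes all quantities regular at `r = 0`. -/
structure BesselSlice (R c Λ : ℝ) (e p p' f q : ℝ → ℝ) : Prop where
  continuousOn_e : ContinuousOn e (Icc 0 R)
  continuousOn_p : ContinuousOn p (Icc 0 R)
  continuousOn_p' : ContinuousOn p' (Ioo 0 R)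
  continuousOn_f : ContinuousOn f (Icc 0 R)
  contBddOn_q : ContBddOn q (Ioo 0 R)
  contBddOn_e_sq_div : ContBddOn (fun r => e r ^ 2 / r) (Ioo 0 R)
  hasDerivAt_u : ∀ r ∈ Ioo 0 R, HasDerivAt (fun r => r * e r) (p r) r
  hasDerivAt_p : ∀ r ∈ Ioo 0 R, HasDerivAt p (p' r) r
  hasDerivAt_u_t : ∀ r ∈ Ioo 0 R, HasDerivAt (fun r => r * f r) (q r) r
  e_zero : e 0 = 0
  p_zero : p 0 = 0
  e_right : e R = 0
  f_right : f R = 0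
  sq_residual_le : ∀ r ∈ Ioo 0 R,
    (r * f r - p' r + c * (e r / r)) ^ 2 ≤ Λ * (p r ^ 2 + c * e r ^ 2)

/-- The squared norm `∫ u² W` of `u = r e` in the Gaussian weight. -/
noncomputable def gaussianNormSq (α r₀ R : ℝ) (e : ℝ → ℝ) : ℝ :=
  weightedInner (gaussianWeight α r₀) R (fun r => r * e r) fun r => r * e r

/-- The energy `∫ (u_r² + c u² / r²) W` for `u_r = p` and `u = r e`. -/
noncomputable def gaussianEnergy (α r₀ c R : ℝ) (e p : ℝ → ℝ) : ℝ :=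
  weightedInner (gaussianWeight α r₀) R p p + c * weightedInner (gaussianWeight α r₀) R e e

/-- The time derivative of `gaussianEnergy`. -/
noncomputable def gaussianEnergyDeriv (α r₀ c R : ℝ) (e p f q : ℝ → ℝ) : ℝ :=
  gaussianNormSqDeriv α r₀ R p q + c * gaussianNormSqDeriv α r₀ R e f

/-- The failure `u_t - u_rr + c u / r²` of the Bessel heat equation. -/
noncomputable def besselResidual (c : ℝ) (e p' f : ℝ → ℝ) (r : ℝ) : ℝ :=
  r * f r - p' r + c * (e r / r)

/-- The operator `-W⁻¹ (W u_r)_r + c u / r²` applied to `u`; it is symmetric in the weighted inner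
product, with quadratic form `gaussianEnergy`. -/
noncomputable def besselOperator (α r₀ c : ℝ) (e p p' : ℝ → ℝ) (r : ℝ) : ℝ :=
  α * (r - r₀) * p r - p' r + c * (e r / r)

namespace BesselSlice

variable {R c Λ α r₀ : ℝ} {e p p' f q : ℝ → ℝ}

theorem contBddOn_e (h : BesselSlice R c Λ e p p' f q) : ContBddOn e (Ioo 0 R) :=
  .of_continuousOn_Icc h.continuousOn_e

theorem contBddOn_p (h : BesselSlice R c Λ e p p' f q) : ContBddOn p (Ioo 0 R) :=
  .of_continuousOn_Icc h.continuousOn_p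

theorem contBddOn_f (h : BesselSlice R c Λ e p p' f q) : ContBddOn f (Ioo 0 R) :=
  .of_continuousOn_Icc h.continuousOn_f

@[fun_prop]
theorem contBddOn_id : ContBddOn (fun r : ℝ => r) (Ioo 0 R) :=
  .of_continuousOn_Icc continuousOn_id

theorem hasDerivAt_e (h : BesselSlice R c Λ e p p' f q) {r : ℝ} (hr : r ∈ Ioo 0 R) :
    HasDerivAt e ((p r - e r) / r) r := by
  have hr0 : r ≠ 0 := hr.1.ne'
  refine (((h.hasDerivAt_u r hr).div (hasDerivAt_id r) hr0).congr_deriv ?_).congr_of_eventuallyEq ?_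
  · simp only [id_eq]
    field_simp
  · filter_upwards [isOpen_ne.mem_nhds hr0] with s hs
    exact (mul_div_cancel_left₀ (e s) hs).symm

theorem contBddOn_residual (h : BesselSlice R c Λ e p p' f q) :
    ContBddOn (besselResidual c e p' f) (Ioo 0 R) := by
  have he := h.contBddOn_e
  have hp := h.contBddOn_p
  obtain ⟨-, M, hM⟩ : ContBddOn (fun r => Λ * (p r ^ 2 + c * e r ^ 2)) (Ioo 0 R) := by fun_prop
  refine ⟨?_, √M, fun r hr => Real.abs_le_sqrt ?_⟩
  · exact ((continuousOn_id.mul h.contBddOn_f.1).sub h.continuousOn_p').add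
      (continuousOn_const.mul (he.1.div continuousOn_id fun r hr => hr.1.ne'))
  · exact (h.sq_residual_le r hr).trans ((le_abs_self _).trans (hM r hr))

theorem operator_eq (r : ℝ) : besselOperator α r₀ c e p p' r =
    α * (r - r₀) * p r - r * f r + besselResidual c e p' f r := by
  simp only [besselOperator, besselResidual]
  ring

theorem contBddOn_operator (h : BesselSlice R c Λ e p p' f q) :
    ContBddOn (besselOperator α r₀ c e p p') (Ioo 0 R) := by
  have hp := h.contBddOn_p
  have hf := h.contBddOn_f
  have hg := h.contBddOn_residual
  exact ContBddOn.congr (f := fun r => α * (r - r₀) * p r - r * f r + besselResidual c e p' f r)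
    (by fun_prop) fun r _ => operator_eq r

theorem gaussianEnergy_eq_integral (h : BesselSlice R c Λ e p p' f q) (hR : 0 ≤ R) :
    gaussianEnergy α r₀ c R e p =
      ∫ r in (0 : ℝ)..R, (p r ^ 2 + c * e r ^ 2) * gaussianWeight α r₀ r := by
  have he := h.contBddOn_e
  have hp := h.contBddOn_p
  have hlin := integral_linearCombination hR (f := fun r => p r * p r * gaussianWeight α r₀ r)
    (g := fun r => e r * e r * gaussianWeight α r₀ r) (h := 0) (by fun_prop) (by fun_prop)
    (ContBddOn.const 0) 1 c 0
  simp only [one_mul, zero_mul, add_zero] at hlin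
  rw [gaussianEnergy, weightedInner, weightedInner, ← hlin]
  congr 1 with r
  ring

theorem gaussianEnergy_eq_inner (h : BesselSlice R c Λ e p p' f q) (hR : 0 ≤ R) :
    gaussianEnergy α r₀ c R e p =
      weightedInner (gaussianWeight α r₀) R (fun r => r * e r) (besselOperator α r₀ c e p p') := by
  have he := h.contBddOn_e
  have hp := h.contBddOn_p
  have ha := h.contBddOn_operator (α := α) (r₀ := r₀)
  rw [h.gaussianEnergy_eq_integral hR]
  refine integral_eq_of_flux hR (F := fun r => r * e r * p r * gaussianWeight α r₀ r) (by fun_prop)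
    (by fun_prop) ?_ (fun r hr => ?_) (by simp [h.e_right])
  · exact ((continuousOn_id.mul h.continuousOn_e).mul h.continuousOn_p).mul
      continuous_gaussianWeight.continuousOn
  · refine (((h.hasDerivAt_u r hr).mul (h.hasDerivAt_p r hr)).mul
      (hasDerivAt_gaussianWeight r)).congr_deriv ?_
    have := hr.1.ne'
    simp only [besselOperator, Pi.mul_apply]
    field_simp
    ring

theorem gaussianNormSqDeriv_eq (h : BesselSlice R c Λ e p p' f q) (hR : 0 ≤ R) :
    gaussianNormSqDeriv α r₀ R (fun r => r * e r) (fun r => r * f r) =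
      2 * weightedInner (gaussianWeight α r₀) R (fun r => r * e r) (besselResidual c e p' f) -
        2 * gaussianEnergy α r₀ c R e p - α * gaussianNormSq α r₀ R e := by
  have he := h.contBddOn_e
  have hf := h.contBddOn_f
  have hg := h.contBddOn_residual
  have ha := h.contBddOn_operator (α := α) (r₀ := r₀)
  have hlin := integral_linearCombination hR
    (f := fun r => r * e r * besselResidual c e p' f r * gaussianWeight α r₀ r)
    (g := fun r => r * e r * besselOperator α r₀ c e p p' r * gaussianWeight α r₀ r)
    (h := fun r => r * e r * (r * e r) * gaussianWeight α r₀ r)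
    (by fun_prop) (by fun_prop) (by fun_prop) 2 (-2) (-α)
  have hflux : gaussianNormSqDeriv α r₀ R (fun r => r * e r) (fun r => r * f r) = _ :=
    (integral_eq_of_flux hR (g := fun r =>
      2 * (r * e r * besselResidual c e p' f r * gaussianWeight α r₀ r) +
      -2 * (r * e r * besselOperator α r₀ c e p p' r * gaussianWeight α r₀ r) +
      -α * (r * e r * (r * e r) * gaussianWeight α r₀ r))
      (F := fun r => (r * e r) ^ 2 * (α * (r - r₀)) * gaussianWeight α r₀ r)
      (by fun_prop) (by fun_prop) (.mul (.mul (.pow (continuousOn_id.mul h.continuousOn_e) 2)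
        (by fun_prop)) (by fun_prop)) (fun r hr => ?_) (by simp [h.e_right])).trans hlin
  · rw [hflux, h.gaussianEnergy_eq_inner hR, gaussianNormSq, weightedInner, weightedInner,
      weightedInner]
    ring
  · refine ((((h.hasDerivAt_u r hr).pow 2).mul (((hasDerivAt_id r).sub_const r₀).const_mul α)).mul
      (hasDerivAt_gaussianWeight r)).congr_deriv ?_
    simp only [operator_eq (f := f), Pi.mul_apply, Pi.pow_apply, id_eq]
    push_cast
    ring

theorem gaussianEnergyDeriv_eq_integral (h : BesselSlice R c Λ e p p' f q) (hR : 0 ≤ R) :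
    gaussianEnergyDeriv α r₀ c R e p f q = ∫ r in (0 : ℝ)..R,
      (2 * (p r * q r) - (α * (r - r₀) * p r) ^ 2 +
        c * (2 * (e r * f r) - (α * (r - r₀) * e r) ^ 2)) * gaussianWeight α r₀ r := by
  have he := h.contBddOn_e
  have hp := h.contBddOn_p
  have hf := h.contBddOn_f
  have hq := h.contBddOn_q
  have hlin := integral_linearCombination hR
    (f := fun r => (2 * (p r * q r) - (α * (r - r₀) * p r) ^ 2) * gaussianWeight α r₀ r)
    (g := fun r => (2 * (e r * f r) - (α * (r - r₀) * e r) ^ 2) * gaussianWeight α r₀ r) (h := 0)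
    (by fun_prop) (by fun_prop) (ContBddOn.const 0) 1 c 0
  simp only [one_mul, zero_mul, add_zero] at hlin
  rw [gaussianEnergyDeriv, gaussianNormSqDeriv, gaussianNormSqDeriv, ← hlin]
  congr 1 with r
  ring

/-- Integrating by parts in `gaussianEnergyDeriv` means subtracting the `r`-derivative of this
flux. -/
noncomputable def energyFlux (α r₀ c : ℝ) (e p f : ℝ → ℝ) (r : ℝ) : ℝ :=
  (2 * (p r * (r * f r)) - (p r ^ 2 - c * e r ^ 2) * (α * (r - r₀))) * gaussianWeight α r₀ r

theorem hasDerivAt_energyFlux (h : BesselSlice R c Λ e p p' f q) {r : ℝ} (hr : r ∈ Ioo 0 R) :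
    HasDerivAt (energyFlux α r₀ c e p f)
      ((2 * (p r * q r) - (α * (r - r₀) * p r) ^ 2 +
          c * (2 * (e r * f r) - (α * (r - r₀) * e r) ^ 2)) * gaussianWeight α r₀ r -
        (2 * (besselOperator α r₀ c e p p' r * besselResidual c e p' f r) -
          2 * besselOperator α r₀ c e p p' r ^ 2 + α * (p r ^ 2 + c * e r ^ 2) -
          2 * α * c * r₀ * (e r ^ 2 / r)) * gaussianWeight α r₀ r) r := by
  have hp := h.hasDerivAt_p r hr
  refine ((((hp.mul (h.hasDerivAt_u_t r hr)).const_mul 2).sub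
    (((hp.pow 2).sub (((h.hasDerivAt_e hr).pow 2).const_mul c)).mul
      (((hasDerivAt_id r).sub_const r₀).const_mul α))).mul
      (hasDerivAt_gaussianWeight r)).congr_deriv ?_
  have := hr.1.ne'
  simp only [besselOperator, besselResidual, Pi.mul_apply, Pi.sub_apply, Pi.pow_apply, id_eq]
  push_cast
  field_simp
  ring

theorem gaussianEnergyDeriv_le (h : BesselSlice R c Λ e p p' f q) (hc : 0 ≤ c) (hα : 0 ≤ α)
    (hr₀ : r₀ ∈ Icc 0 R) :
    gaussianEnergyDeriv α r₀ c R e p f q ≤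
      2 * weightedInner (gaussianWeight α r₀) R (besselOperator α r₀ c e p p')
          (besselResidual c e p' f) -
        2 * weightedInner (gaussianWeight α r₀) R (besselOperator α r₀ c e p p')
          (besselOperator α r₀ c e p p') + α * gaussianEnergy α r₀ c R e p := by
  have hR : 0 ≤ R := hr₀.1.trans hr₀.2
  have he := h.contBddOn_e
  have hp := h.contBddOn_p
  have hf := h.contBddOn_f
  have hq := h.contBddOn_q
  have hg := h.contBddOn_residual
  have he' := h.contBddOn_e_sq_div
  have ha := h.contBddOn_operator (α := α) (r₀ := r₀)
  set g := besselResidual c e p' f with hg_def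
  set a := besselOperator α r₀ c e p p' with ha_def
  have hlin := integral_linearCombination hR (f := fun r => a r * g r * gaussianWeight α r₀ r)
    (g := fun r => a r * a r * gaussianWeight α r₀ r)
    (h := fun r => (p r ^ 2 + c * e r ^ 2) * gaussianWeight α r₀ r)
    (by fun_prop) (by fun_prop) (by fun_prop) 2 (-2) α
  rw [h.gaussianEnergyDeriv_eq_integral hR, h.gaussianEnergy_eq_integral hR]
  refine (integral_le_of_flux hR (F := energyFlux α r₀ c e p f) (by fun_prop) (by fun_prop)
    ?_ ?_ (fun r hr => h.hasDerivAt_energyFlux hr) ?_ fun r hr => ?_).trans_eq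
      (hlin.trans (by simp only [weightedInner]; ring))
  · rw [← ha_def, ← hg_def]
    fun_prop
  · have := h.continuousOn_e
    have := h.continuousOn_p
    have := h.continuousOn_f
    unfold energyFlux
    fun_prop
  · have hW := (gaussianWeight_pos (α := α) (r₀ := r₀) R).le
    have hYR : 0 ≤ α * (R - r₀) := mul_nonneg hα (sub_nonneg.2 hr₀.2)
    have hflux : 0 ≤ p R ^ 2 * (α * (R - r₀)) * gaussianWeight α r₀ R := by positivity
    simp only [energyFlux, h.e_zero, h.p_zero, h.e_right, h.f_right]
    linarith
  · have hdrift : 0 ≤ 2 * α * c * r₀ * (e r ^ 2 / r) * gaussianWeight α r₀ r := by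
      have := hr₀.1
      have := hr.1
      have := (gaussianWeight_pos (α := α) (r₀ := r₀) r).le
      positivity
    rw [← ha_def, ← hg_def]
    linarith

theorem residual_inner_self_le (h : BesselSlice R c Λ e p p' f q) (hR : 0 ≤ R) :
    weightedInner (gaussianWeight α r₀) R (besselResidual c e p' f) (besselResidual c e p' f) ≤
      Λ * gaussianEnergy α r₀ c R e p := by
  have he := h.contBddOn_e
  have hp := h.contBddOn_p
  have hg := h.contBddOn_residual
  rw [h.gaussianEnergy_eq_integral hR, ← intervalIntegral.integral_const_mul]
  refine intervalIntegral.integral_mono_on_of_le_Ioo hR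
    (ContBddOn.intervalIntegrable hR (by fun_prop))
    (ContBddOn.intervalIntegrable hR (by fun_prop)) fun r hr => ?_
  rw [← mul_assoc, ← sq]
  exact mul_le_mul_of_nonneg_right (h.sq_residual_le r hr) (gaussianWeight_pos r).le

theorem gaussianEnergy_nonneg (hR : 0 ≤ R) (hc : 0 ≤ c) : 0 ≤ gaussianEnergy α r₀ c R e p :=
  add_nonneg (weightedInner_self_nonneg hR fun r => (gaussianWeight_pos r).le)
    (mul_nonneg hc (weightedInner_self_nonneg hR fun r => (gaussianWeight_pos r).le))

theorem sq_residual_inner_le (h : BesselSlice R c Λ e p p' f q) (hR : 0 ≤ R) :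
    weightedInner (gaussianWeight α r₀) R (fun r => r * e r) (besselResidual c e p' f) ^ 2 ≤
      gaussianNormSq α r₀ R e * weightedInner (gaussianWeight α r₀) R
        (besselResidual c e p' f) (besselResidual c e p' f) := by
  have he := h.contBddOn_e
  exact weightedInner_sq_le hR contBddOn_gaussianWeight (fun r => (gaussianWeight_pos r).le)
    (by fun_prop) h.contBddOn_residual

theorem gaussianNormSq_nonneg (hR : 0 ≤ R) : 0 ≤ gaussianNormSq α r₀ R e :=
  weightedInner_self_nonneg hR fun r => (gaussianWeight_pos r).le

theorem le_gaussianNormSqDeriv (h : BesselSlice R c Λ e p p' f q) (hR : 0 ≤ R) :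
    -(2 + Λ) * gaussianEnergy α r₀ c R e p - (1 + α) * gaussianNormSq α r₀ R e ≤
      gaussianNormSqDeriv α r₀ R (fun r => r * e r) (fun r => r * f r) := by
  have he := h.contBddOn_e
  have hsq := weightedInner_self_nonneg hR (w := gaussianWeight α r₀)
    (f := fun r => r * e r + 1 * besselResidual c e p' f r) fun r => (gaussianWeight_pos r).le
  rw [weightedInner_add_mul_self hR contBddOn_gaussianWeight (by fun_prop) h.contBddOn_residual,
    ← gaussianNormSq] at hsq
  rw [h.gaussianNormSqDeriv_eq hR]
  linarith [h.residual_inner_self_le hR (α := α) (r₀ := r₀)]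

theorem gaussianNormSqDeriv_le (h : BesselSlice R c Λ e p p' f q) (hR : 0 ≤ R) (hc : 0 ≤ c)
    (hα : 0 ≤ α) (hΛ : 0 ≤ Λ) :
    gaussianNormSqDeriv α r₀ R (fun r => r * e r) (fun r => r * f r) ≤
      Λ / 2 * gaussianNormSq α r₀ R e := by
  have hH := gaussianNormSq_nonneg hR (α := α) (r₀ := r₀) (e := e)
  have hD := gaussianEnergy_nonneg hR hc (α := α) (r₀ := r₀) (e := e) (p := p)
  have hcross : weightedInner (gaussianWeight α r₀) R (fun r => r * e r)
      (besselResidual c e p' f) ≤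
        gaussianEnergy α r₀ c R e p + Λ / 4 * gaussianNormSq α r₀ R e := by
    refine (abs_le_of_sq_le_sq' ?_ (by positivity)).2
    have hQ := mul_le_mul_of_nonneg_left (h.residual_inner_self_le hR (α := α) (r₀ := r₀)) hH
    nlinarith [h.sq_residual_inner_le hR (α := α) (r₀ := r₀),
      sq_nonneg (gaussianEnergy α r₀ c R e p - Λ / 4 * gaussianNormSq α r₀ R e)]
  rw [h.gaussianNormSqDeriv_eq hR]
  linarith [mul_nonneg hα hH]

/-- Up to the error term, the frequency `D / H` satisfies `(D / H)' ≤ 2 α D / H`: the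
Cauchy–Schwarz inequality is applied to `u` and `a - g / 2`, where `a` is the operator and `g` the
residual. -/
theorem frequency_deriv_le (h : BesselSlice R c Λ e p p' f q) (hc : 0 ≤ c) (hα : 0 ≤ α)
    (hr₀ : r₀ ∈ Icc 0 R) :
    (gaussianEnergyDeriv α r₀ c R e p f q - 2 * α * gaussianEnergy α r₀ c R e p) *
        gaussianNormSq α r₀ R e - gaussianEnergy α r₀ c R e p *
          gaussianNormSqDeriv α r₀ R (fun r => r * e r) (fun r => r * f r) ≤
      Λ / 2 * gaussianEnergy α r₀ c R e p * gaussianNormSq α r₀ R e := by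
  have hR : 0 ≤ R := hr₀.1.trans hr₀.2
  have he := h.contBddOn_e
  have hg := h.contBddOn_residual
  have ha := h.contBddOn_operator (α := α) (r₀ := r₀)
  have hcs := weightedInner_sq_le hR contBddOn_gaussianWeight (w := gaussianWeight α r₀)
    (fun r => (gaussianWeight_pos r).le) (f := fun r => r * e r)
    (g := fun r => besselOperator α r₀ c e p p' r + -1 / 2 * besselResidual c e p' f r)
    (by fun_prop) (by fun_prop)
  rw [weightedInner_add_mul_self hR contBddOn_gaussianWeight ha hg,
    weightedInner_add_mul_right hR contBddOn_gaussianWeight (by fun_prop) ha hg,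
    ← h.gaussianEnergy_eq_inner hR, ← gaussianNormSq] at hcs
  have hH := gaussianNormSq_nonneg hR (α := α) (r₀ := r₀) (e := e)
  have henergy := mul_le_mul_of_nonneg_right (h.gaussianEnergyDeriv_le hc hα hr₀) hH
  have hresidual := mul_le_mul_of_nonneg_right (h.residual_inner_self_le hR (α := α) (r₀ := r₀)) hH
  rw [h.gaussianNormSqDeriv_eq hR]
  nlinarith [sq_nonneg (weightedInner (gaussianWeight α r₀) R (fun r => r * e r)
    (besselResidual c e p' f))]

end BesselSlice

end Slice

open scoped Topology in
theorem ContBddOn.hasDerivAt_integral {a b t : ℝ} {U : Set ℝ} {F F' : ℝ → ℝ → ℝ} (hab : a ≤ b)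
    (hU : U ∈ 𝓝 t) (hF : ContBddOn (fun x : ℝ × ℝ => F x.1 x.2) (Ioo a b ×ˢ U))
    (hF' : ContBddOn (fun x : ℝ × ℝ => F' x.1 x.2) (Ioo a b ×ˢ U))
    (hd : ∀ r ∈ Ioo a b, ∀ s ∈ U, HasDerivAt (F r) (F' r s) s) :
    HasDerivAt (fun s => ∫ r in a..b, F r s) (∫ r in a..b, F' r t) t := by
  have hslice {G : ℝ → ℝ → ℝ} (hG : ContBddOn (fun x : ℝ × ℝ => G x.1 x.2) (Ioo a b ×ˢ U)) {s : ℝ}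
      (hs : s ∈ U) : IntervalIntegrable (fun r => G r s) MeasureTheory.volume a b :=
    (hG.comp (φ := fun r => (r, s)) (by fun_prop) fun r hr => ⟨hr, hs⟩).intervalIntegrable hab
  have hIoo {P : ℝ → Prop} (hP : ∀ r ∈ Ioo a b, P r) :
      ∀ᵐ r, r ∈ uIoc a b → P r := by
    rw [← MeasureTheory.ae_restrict_iff' measurableSet_uIoc, uIoc_of_le hab,
      ← MeasureTheory.restrict_Ioo_eq_restrict_Ioc]
    exact MeasureTheory.ae_restrict_of_forall_mem measurableSet_Ioo hP
  obtain ⟨M, hM⟩ := hF'.2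
  have ht := mem_of_mem_nhds hU
  exact (intervalIntegral.hasDerivAt_integral_of_dominated_loc_of_deriv_le
    (F := fun s r => F r s) (F' := fun s r => F' r s) (bound := fun _ => M) hU
    (by filter_upwards [hU] with s hs using (hslice hF hs).aestronglyMeasurable_restrict_uIoc)
    (hslice hF ht) (hslice hF' ht).aestronglyMeasurable_restrict_uIoc
    (hIoo fun r hr s hs => hM (r, s) ⟨hr, hs⟩) intervalIntegrable_const (hIoo hd)).2

section Flow

theorem ContBddOn.of_continuousOn_Icc_prod {a b τ₁ τ₂ : ℝ} {F : ℝ × ℝ → ℝ}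
    (hF : ContinuousOn F (Icc a b ×ˢ Icc τ₁ τ₂)) : ContBddOn F (Ioo a b ×ˢ Ioo τ₁ τ₂) :=
  .of_isCompact (isCompact_Icc.prod isCompact_Icc) hF
    (prod_mono Ioo_subset_Icc_self Ioo_subset_Icc_self)

theorem continuousOn_gaussianVariance_inv {T τ : ℝ} (hT : τ < T) (s : Set ℝ) (τ₁ : ℝ) :
    ContinuousOn (fun x : ℝ × ℝ => 1 / (2 * (T - x.2))) (s ×ˢ Icc τ₁ τ) :=
  continuousOn_const.div (by fun_prop) fun x hx => by linarith [hx.2.2]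

theorem hasDerivAt_weightedInner_self {R T t τ₁ τ₂ : ℝ} (r₀ : ℝ) {f g : ℝ → ℝ → ℝ} (hR : 0 ≤ R)
    (hf : ContBddOn (fun x : ℝ × ℝ => f x.1 x.2) (Ioo 0 R ×ˢ Ioo τ₁ τ₂))
    (hg : ContBddOn (fun x : ℝ × ℝ => g x.1 x.2) (Ioo 0 R ×ˢ Ioo τ₁ τ₂))
    (hd : ∀ r ∈ Ioo 0 R, ∀ s ∈ Ioo τ₁ τ₂, HasDerivAt (f r) (g r s) s)
    (ht : t ∈ Ioo τ₁ τ₂) (hT : t < T) :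
    HasDerivAt (fun s => weightedInner (gaussianWeight (1 / (2 * (T - s))) r₀) R
      (fun r => f r s) fun r => f r s)
      (gaussianNormSqDeriv (1 / (2 * (T - t))) r₀ R (fun r => f r t) fun r => g r t) t := by
  obtain ⟨τ₃, ht₃, hτ₃⟩ := exists_between (lt_min ht.2 hT)
  rw [lt_min_iff] at hτ₃
  have hsub : Ioo τ₁ τ₃ ⊆ Ioo τ₁ τ₂ := Ioo_subset_Ioo_right hτ₃.1.le
  have hf := hf.mono (prod_mono_right hsub)
  have hg := hg.mono (prod_mono_right hsub)
  have hα := continuousOn_gaussianVariance_inv hτ₃.2 (Icc 0 R) τ₁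
  have hY : ContBddOn (fun x : ℝ × ℝ => 1 / (2 * (T - x.2)) * (x.1 - r₀)) (Ioo 0 R ×ˢ Ioo τ₁ τ₃) :=
    .of_continuousOn_Icc_prod (hα.mul (by fun_prop))
  have hW : ContBddOn (fun x : ℝ × ℝ => gaussianWeight (1 / (2 * (T - x.2))) r₀ x.1)
      (Ioo 0 R ×ˢ Ioo τ₁ τ₃) := by
    refine .of_continuousOn_Icc_prod ?_
    unfold gaussianWeight
    fun_prop
  refine ContBddOn.hasDerivAt_integral hR (Ioo_mem_nhds ht.1 ht₃)
    (F := fun r s => f r s * f r s * gaussianWeight (1 / (2 * (T - s))) r₀ r)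
    (F' := fun r s => (2 * (f r s * g r s) - (1 / (2 * (T - s)) * (r - r₀) * f r s) ^ 2) *
      gaussianWeight (1 / (2 * (T - s))) r₀ r) (by fun_prop) (by fun_prop) fun r hr s hs => ?_
  refine (((hd r hr s (hsub hs)).mul (hd r hr s (hsub hs))).mul
    (hasDerivAt_gaussianWeight_backward (hs.2.trans hτ₃.2) r)).congr_deriv ?_
  simp only [Pi.mul_apply]
  ring

/-- A family of `BesselSlice`s over the time interval `(τ₁, τ₂)` with `e_t = f` and `p_t = q`, and
with bounds uniform in time. -/
structure BesselFlow (R c Λ τ₁ τ₂ : ℝ) (e p p' f q : ℝ → ℝ → ℝ) : Prop where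
  slice : ∀ t ∈ Ioo τ₁ τ₂, BesselSlice R c Λ (fun r => e r t) (fun r => p r t) (fun r => p' r t)
    (fun r => f r t) fun r => q r t
  hasDerivAt_e : ∀ r ∈ Ioo 0 R, ∀ t ∈ Ioo τ₁ τ₂, HasDerivAt (e r) (f r t) t
  hasDerivAt_p : ∀ r ∈ Ioo 0 R, ∀ t ∈ Ioo τ₁ τ₂, HasDerivAt (p r) (q r t) t
  contBddOn_e : ContBddOn (fun x : ℝ × ℝ => e x.1 x.2) (Ioo 0 R ×ˢ Ioo τ₁ τ₂)
  contBddOn_p : ContBddOn (fun x : ℝ × ℝ => p x.1 x.2) (Ioo 0 R ×ˢ Ioo τ₁ τ₂)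
  contBddOn_f : ContBddOn (fun x : ℝ × ℝ => f x.1 x.2) (Ioo 0 R ×ˢ Ioo τ₁ τ₂)
  contBddOn_q : ContBddOn (fun x : ℝ × ℝ => q x.1 x.2) (Ioo 0 R ×ˢ Ioo τ₁ τ₂)

namespace BesselFlow

variable {R c Λ τ₁ τ₂ T t r₀ : ℝ} {e p p' f q : ℝ → ℝ → ℝ}

theorem hasDerivAt_gaussianNormSq (h : BesselFlow R c Λ τ₁ τ₂ e p p' f q) (hR : 0 ≤ R)
    (ht : t ∈ Ioo τ₁ τ₂) (hT : t < T) :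
    HasDerivAt (fun s => gaussianNormSq (1 / (2 * (T - s))) r₀ R fun r => e r s)
      (gaussianNormSqDeriv (1 / (2 * (T - t))) r₀ R (fun r => r * e r t) fun r => r * f r t) t := by
  have hid : ContBddOn (fun x : ℝ × ℝ => x.1) (Ioo 0 R ×ˢ Ioo τ₁ τ₂) :=
    BesselSlice.contBddOn_id.comp continuousOn_fst fun x hx => hx.1
  exact hasDerivAt_weightedInner_self r₀ hR (f := fun r s => r * e r s)
    (g := fun r s => r * f r s) (hid.mul h.contBddOn_e)
    (hid.mul h.contBddOn_f) (fun r hr s hs => (h.hasDerivAt_e r hr s hs).const_mul r) ht hT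

theorem hasDerivAt_gaussianEnergy (h : BesselFlow R c Λ τ₁ τ₂ e p p' f q) (hR : 0 ≤ R)
    (ht : t ∈ Ioo τ₁ τ₂) (hT : t < T) :
    HasDerivAt (fun s => gaussianEnergy (1 / (2 * (T - s))) r₀ c R (fun r => e r s) fun r => p r s)
      (gaussianEnergyDeriv (1 / (2 * (T - t))) r₀ c R (fun r => e r t) (fun r => p r t)
        (fun r => f r t) fun r => q r t) t :=
  (hasDerivAt_weightedInner_self r₀ hR h.contBddOn_p h.contBddOn_q h.hasDerivAt_p ht hT).add
    ((hasDerivAt_weightedInner_self r₀ hR h.contBddOn_e h.contBddOn_f h.hasDerivAt_e ht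
      hT).const_mul c)

end BesselFlow

end Flow

section Frequency

/-- The differential inequalities on `[p, q]` between a squared norm `H` and an energy `D`, with
derivatives `H'` and `D'`, taken in the backward Gaussian weight with pole time `T`. The
parabolic frequency is `(T - t) D / H`. -/
structure FrequencyBounds (Λ T p q : ℝ) (H D H' D' : ℝ → ℝ) : Prop where
  hasDerivAt_normSq : ∀ t ∈ Icc p q, HasDerivAt H (H' t) t
  hasDerivAt_energy : ∀ t ∈ Icc p q, HasDerivAt D (D' t) t
  normSq_nonneg : ∀ t ∈ Icc p q, 0 ≤ H t
  energy_nonneg : ∀ t ∈ Icc p q, 0 ≤ D t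
  le_normSq_deriv : ∀ t ∈ Icc p q, -(2 + Λ) * D t - (1 + 1 / (2 * (T - t))) * H t ≤ H' t
  frequency_deriv_le : ∀ t ∈ Icc p q,
    (D' t - 2 * (1 / (2 * (T - t))) * D t) * H t - D t * H' t ≤ Λ / 2 * D t * H t

namespace FrequencyBounds

variable {Λ T p q M : ℝ} {H D H' D' : ℝ → ℝ}

theorem mono {s : ℝ} (h : FrequencyBounds Λ T p q H D H' D') (hs : s ≤ q) :
    FrequencyBounds Λ T p s H D H' D' where
  hasDerivAt_normSq t ht := h.hasDerivAt_normSq t ⟨ht.1, ht.2.trans hs⟩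
  hasDerivAt_energy t ht := h.hasDerivAt_energy t ⟨ht.1, ht.2.trans hs⟩
  normSq_nonneg t ht := h.normSq_nonneg t ⟨ht.1, ht.2.trans hs⟩
  energy_nonneg t ht := h.energy_nonneg t ⟨ht.1, ht.2.trans hs⟩
  le_normSq_deriv t ht := h.le_normSq_deriv t ⟨ht.1, ht.2.trans hs⟩
  frequency_deriv_le t ht := h.frequency_deriv_le t ⟨ht.1, ht.2.trans hs⟩

theorem antitoneOn_frequency (h : FrequencyBounds Λ T p q H D H' D') (hT : q < T)
    (hpos : ∀ t ∈ Ico p q, 0 < H t) :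
    AntitoneOn (fun t => (T - t) * D t / H t * Real.exp (-(Λ / 2 * t))) (Ico p q) := by
  have hd : ∀ t ∈ Ico p q, HasDerivAt (fun t => (T - t) * D t / H t * Real.exp (-(Λ / 2 * t)))
      (((D' t - 2 * (1 / (2 * (T - t))) * D t) * H t - D t * H' t - Λ / 2 * D t * H t) *
        ((T - t) / H t ^ 2 * Real.exp (-(Λ / 2 * t)))) t := fun t ht => by
    have hHt := (hpos t ht).ne'
    have hTt : T - t ≠ 0 := by linarith [ht.2]
    refine ((((hasDerivAt_id t).const_sub T).mul
      (h.hasDerivAt_energy t (Ico_subset_Icc_self ht))).div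
        (h.hasDerivAt_normSq t (Ico_subset_Icc_self ht)) hHt).mul
          ((hasDerivAt_id t).const_mul (Λ / 2)).neg.exp |>.congr_deriv ?_
    simp only [Pi.mul_apply, Pi.div_apply, Pi.neg_apply, id_eq]
    field_simp
    ring
  refine antitoneOn_of_hasDerivWithinAt_nonpos (convex_Ico p q)
    (fun t ht => (hd t ht).continuousAt.continuousWithinAt)
    (fun t ht => (hd t (interior_subset ht)).hasDerivWithinAt) fun t ht => ?_
  have ht := interior_subset ht
  have hTt : 0 < T - t := by linarith [ht.2]
  exact mul_nonpos_of_nonpos_of_nonneg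
    (sub_nonpos.2 (h.frequency_deriv_le t (Ico_subset_Icc_self ht))) (by positivity)

theorem frequency_le (h : FrequencyBounds Λ T p q H D H' D') (hΛ : 0 ≤ Λ) (hT : q < T)
    (hpos : ∀ t ∈ Ico p q, 0 < H t) {t : ℝ} (ht : t ∈ Ico p q) :
    (T - t) * D t / H t ≤ (T - p) * D p / H p * Real.exp (Λ / 2 * (q - p)) := by
  have hp : p ∈ Ico p q := ⟨le_rfl, ht.1.trans_lt ht.2⟩
  have hfreq : 0 ≤ (T - p) * D p / H p :=
    div_nonneg (mul_nonneg (by linarith [hp.2]) (h.energy_nonneg p (Ico_subset_Icc_self hp)))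
      (hpos p hp).le
  calc (T - t) * D t / H t
      = (T - t) * D t / H t * Real.exp (-(Λ / 2 * t)) * Real.exp (Λ / 2 * t) := by
        rw [mul_assoc, ← Real.exp_add, neg_add_cancel, Real.exp_zero, mul_one]
    _ ≤ (T - p) * D p / H p * Real.exp (-(Λ / 2 * p)) * Real.exp (Λ / 2 * q) := by
        gcongr ?_ * Real.exp ?_
        · exact h.antitoneOn_frequency hT hpos hp ht ht.1
        · exact mul_le_mul_of_nonneg_left ht.2.le (by positivity)
    _ = (T - p) * D p / H p * Real.exp (Λ / 2 * (q - p)) := by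
        rw [mul_assoc, ← Real.exp_add]
        ring_nf

theorem le_deriv_of_frequency_le (h : FrequencyBounds Λ T p q H D H' D') (hΛ : 0 ≤ Λ) (hT : q < T)
    (hpos : ∀ t ∈ Ico p q, 0 < H t)
    (hM : (2 + Λ) * ((T - p) * D p / H p * Real.exp (Λ / 2 * (q - p))) + 1 / 2 ≤ M) {t : ℝ}
    (ht : t ∈ Ico p q) : -(1 + M / (T - t)) * H t ≤ H' t := by
  have hTt : 0 < T - t := by linarith [ht.2]
  have hHt := hpos t ht
  have hfreq := mul_le_mul_of_nonneg_left (h.frequency_le hΛ hT hpos ht) (by positivity : 0 ≤ 2 + Λ)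
  have hscaled : ((2 + Λ) * ((T - t) * D t / H t) + 1 / 2) * (H t / (T - t)) ≤
      M * (H t / (T - t)) :=
    mul_le_mul_of_nonneg_right (by linarith) (by positivity)
  have hexpand : ((2 + Λ) * ((T - t) * D t / H t) + 1 / 2) * (H t / (T - t)) =
      (2 + Λ) * D t + 1 / (2 * (T - t)) * H t := by
    field_simp
  have hcomm : M * (H t / (T - t)) = M / (T - t) * H t := by ring
  linarith [h.le_normSq_deriv t (Ico_subset_Icc_self ht)]

theorem normSq_mul_exp_le_of_pos (h : FrequencyBounds Λ T p q H D H' D') (hΛ : 0 ≤ Λ)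
    (hpq : p ≤ q) (hT : q < T) (hpos : ∀ t ∈ Ico p q, 0 < H t)
    (hM : (2 + Λ) * ((T - p) * D p / H p * Real.exp (Λ / 2 * (q - p))) + 1 / 2 ≤ M) :
    H p * Real.exp (p - M * Real.log (T - p)) ≤ H q * Real.exp (q - M * Real.log (T - q)) := by
  have hd : ∀ t ∈ Icc p q, HasDerivAt (fun t => H t * Real.exp (t - M * Real.log (T - t)))
      ((H' t + (1 + M / (T - t)) * H t) * Real.exp (t - M * Real.log (T - t))) t := fun t ht => by
    have hTt : T - t ≠ 0 := by linarith [ht.2]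
    refine (h.hasDerivAt_normSq t ht).mul ((hasDerivAt_id t).sub
      ((((hasDerivAt_id t).const_sub T).log hTt).const_mul M)).exp |>.congr_deriv ?_
    simp only [Pi.sub_apply, id_eq]
    ring
  refine monotoneOn_of_hasDerivWithinAt_nonneg (convex_Icc p q)
    (fun t ht => (hd t ht).continuousAt.continuousWithinAt)
    (fun t ht => (hd t (interior_subset ht)).hasDerivWithinAt) (fun t ht => ?_)
    (left_mem_Icc.2 hpq) (right_mem_Icc.2 hpq) hpq
  rw [interior_Icc] at ht
  have hle := h.le_deriv_of_frequency_le hΛ hT hpos hM (Ioo_subset_Ico_self ht)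
  exact mul_nonneg (by linarith) (Real.exp_pos _).le

theorem normSq_pos (h : FrequencyBounds Λ T p q H D H' D') (hΛ : 0 ≤ Λ) (hT : q < T)
    (hp : 0 < H p) : ∀ t ∈ Icc p q, 0 < H t := by
  by_contra! hzero
  obtain ⟨t, ht, hHt⟩ := hzero
  have hcont : ContinuousOn H (Icc p q) := fun t ht =>
    (h.hasDerivAt_normSq t ht).continuousAt.continuousWithinAt
  have hcompact : IsCompact (Icc p q ∩ H ⁻¹' Iic 0) :=
    isCompact_Icc.of_isClosed_subset
      (hcont.preimage_isClosed_of_isClosed isClosed_Icc isClosed_Iic) inter_subset_left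
  obtain ⟨s, ⟨hs, hHs⟩, hfirst⟩ := hcompact.exists_isLeast ⟨t, ht, hHt⟩
  have hpos : ∀ t ∈ Ico p s, 0 < H t := fun t ht => not_le.1 fun hHt =>
    ht.2.not_ge (hfirst ⟨⟨ht.1, ht.2.le.trans hs.2⟩, hHt⟩)
  have hle := (h.mono hs.2).normSq_mul_exp_le_of_pos hΛ hs.1 (hs.2.trans_lt hT) hpos le_rfl
  exact hle.not_gt ((mul_nonpos_of_nonpos_of_nonneg hHs (Real.exp_pos _).le).trans_lt
    (mul_pos hp (Real.exp_pos _)))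

theorem normSq_mul_exp_le (h : FrequencyBounds Λ T p q H D H' D') (hΛ : 0 ≤ Λ) (hpq : p ≤ q)
    (hT : q < T) (hp : 0 < H p)
    (hM : (2 + Λ) * ((T - p) * D p / H p * Real.exp (Λ / 2 * (q - p))) + 1 / 2 ≤ M) :
    H p * Real.exp (p - M * Real.log (T - p)) ≤ H q * Real.exp (q - M * Real.log (T - q)) :=
  h.normSq_mul_exp_le_of_pos hΛ hpq hT
    (fun t ht => h.normSq_pos hΛ hT hp t (Ico_subset_Icc_self ht)) hM

end FrequencyBounds

end Frequency

section UniqueContinuation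

variable {α β r₀ R : ℝ} {f : ℝ → ℝ}

theorem weightedInner_gaussianWeight_antitone (hR : 0 ≤ R) (hf : ContBddOn f (Ioo 0 R))
    (hαβ : α ≤ β) :
    weightedInner (gaussianWeight β r₀) R f f ≤ weightedInner (gaussianWeight α r₀) R f f := by
  refine intervalIntegral.integral_mono_on_of_le_Ioo hR
    (ContBddOn.intervalIntegrable hR (by fun_prop))
    (ContBddOn.intervalIntegrable hR (by fun_prop)) fun r _ =>
      mul_le_mul_of_nonneg_left (Real.exp_le_exp.2 ?_) (mul_self_nonneg _)
  exact mul_le_mul_of_nonneg_right (by linarith) (sq_nonneg _)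

theorem pow_mul_gaussianWeight_le {a : ℝ} (ha : 0 < a) (k : ℕ) (r : ℝ) :
    (|r - r₀| ^ k) ^ 2 * gaussianWeight (1 / (2 * a)) r₀ r ≤ k.factorial * (4 * a) ^ k := by
  have hx : 0 ≤ (r - r₀) ^ 2 / (4 * a) := by positivity
  have hexp := Real.pow_div_factorial_le_exp _ hx k
  have hW : gaussianWeight (1 / (2 * a)) r₀ r = (Real.exp ((r - r₀) ^ 2 / (4 * a)))⁻¹ := by
    rw [gaussianWeight, ← Real.exp_neg]
    congr 1
    field_simp
    ring
  rw [hW, ← div_eq_mul_inv, div_le_iff₀ (Real.exp_pos _), ← pow_mul, mul_comm k, pow_mul, sq_abs]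
  calc ((r - r₀) ^ 2) ^ k
      = k.factorial * (4 * a) ^ k * (((r - r₀) ^ 2 / (4 * a)) ^ k / k.factorial) := by
        have : (k.factorial : ℝ) ≠ 0 := by positivity
        rw [div_pow]
        field_simp
    _ ≤ k.factorial * (4 * a) ^ k * Real.exp ((r - r₀) ^ 2 / (4 * a)) := by gcongr

theorem gaussianNormSq_le_of_flat {e : ℝ → ℝ} {B : ℝ} {k : ℕ} (hR : 0 ≤ R)
    (he : ContinuousOn e (Icc 0 R)) (hflat : ∀ r ∈ Icc 0 R, |r * e r| ≤ B * |r - r₀| ^ k) {a : ℝ}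
    (ha : 0 < a) :
    gaussianNormSq (1 / (2 * a)) r₀ R e ≤ R * (B ^ 2 * (k.factorial * 4 ^ k)) * a ^ k := by
  have he' : ContBddOn e (Ioo 0 R) := .of_continuousOn_Icc he
  have hpt : ∀ r ∈ Ioo 0 R, r * e r * (r * e r) * gaussianWeight (1 / (2 * a)) r₀ r ≤
      B ^ 2 * (k.factorial * (4 * a) ^ k) := fun r hr => by
    calc r * e r * (r * e r) * gaussianWeight (1 / (2 * a)) r₀ r
        = |r * e r| ^ 2 * gaussianWeight (1 / (2 * a)) r₀ r := by rw [sq_abs, sq]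
      _ ≤ (B * |r - r₀| ^ k) ^ 2 * gaussianWeight (1 / (2 * a)) r₀ r := by
          have := (gaussianWeight_pos (α := 1 / (2 * a)) (r₀ := r₀) r).le
          gcongr
          exact hflat r (Ioo_subset_Icc_self hr)
      _ = B ^ 2 * ((|r - r₀| ^ k) ^ 2 * gaussianWeight (1 / (2 * a)) r₀ r) := by ring
      _ ≤ B ^ 2 * (k.factorial * (4 * a) ^ k) :=
          mul_le_mul_of_nonneg_left (pow_mul_gaussianWeight_le ha k r) (sq_nonneg B)
  refine (intervalIntegral.integral_mono_on_of_le_Ioo hR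
    (ContBddOn.intervalIntegrable hR (by fun_prop)) intervalIntegrable_const hpt).trans_eq ?_
  rw [intervalIntegral.integral_const, smul_eq_mul, sub_zero, mul_pow]
  ring

theorem gaussianNormSq_pos {e : ℝ → ℝ} (hR : 0 < R) (he : ContinuousOn e (Icc 0 R)) {r : ℝ}
    (hr : r ∈ Icc 0 R) (hne : r * e r ≠ 0) : 0 < gaussianNormSq α r₀ R e := by
  refine intervalIntegral.integral_pos hR (by fun_prop)
    (fun s _ => mul_nonneg (mul_self_nonneg _) (gaussianWeight_pos s).le)
    ⟨r, hr, mul_pos (mul_self_pos.2 hne) (gaussianWeight_pos r)⟩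

namespace BesselFlow

variable {c Λ τ₁ τ₂ T t₀ t₁ : ℝ} {e p p' f q : ℝ → ℝ → ℝ}

theorem frequencyBounds (h : BesselFlow R c Λ τ₁ τ₂ e p p' f q) (hc : 0 ≤ c) (hr₀ : r₀ ∈ Icc 0 R)
    (ht₀ : τ₁ < t₀) (ht₁ : t₁ < τ₂) (hT : t₁ < T) :
    FrequencyBounds Λ T t₀ t₁
      (fun t => gaussianNormSq (1 / (2 * (T - t))) r₀ R fun r => e r t)
      (fun t => gaussianEnergy (1 / (2 * (T - t))) r₀ c R (fun r => e r t) fun r => p r t)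
      (fun t => gaussianNormSqDeriv (1 / (2 * (T - t))) r₀ R (fun r => r * e r t)
        fun r => r * f r t)
      (fun t => gaussianEnergyDeriv (1 / (2 * (T - t))) r₀ c R (fun r => e r t) (fun r => p r t)
        (fun r => f r t) fun r => q r t) := by
  have hR : 0 ≤ R := hr₀.1.trans hr₀.2
  have hmem {t : ℝ} (ht : t ∈ Icc t₀ t₁) : t ∈ Ioo τ₁ τ₂ := ⟨ht₀.trans_le ht.1, ht.2.trans_lt ht₁⟩
  have hlt {t : ℝ} (ht : t ∈ Icc t₀ t₁) : t < T := ht.2.trans_lt hT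
  exact
  { hasDerivAt_normSq := fun t ht => h.hasDerivAt_gaussianNormSq hR (hmem ht) (hlt ht)
    hasDerivAt_energy := fun t ht => h.hasDerivAt_gaussianEnergy hR (hmem ht) (hlt ht)
    normSq_nonneg := fun _ _ => BesselSlice.gaussianNormSq_nonneg hR
    energy_nonneg := fun _ _ => BesselSlice.gaussianEnergy_nonneg hR hc
    le_normSq_deriv := fun t ht => (h.slice t (hmem ht)).le_gaussianNormSqDeriv hR
    frequency_deriv_le := fun t ht => (h.slice t (hmem ht)).frequency_deriv_le hc
      (one_div_nonneg.2 (by linarith [hlt ht])) hr₀ }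

theorem frequency_initial_le (h : BesselFlow R c Λ τ₁ τ₂ e p p' f q) (hR : 0 ≤ R) (hc : 0 ≤ c)
    (ht₀ : t₀ ∈ Ioo τ₁ τ₂) (ht : t₀ < t₁) {a : ℝ} (ha : a ∈ Ioc (0 : ℝ) 1)
    (hpos : 0 < gaussianNormSq (1 / (2 * (t₁ - t₀))) r₀ R fun r => e r t₀) :
    gaussianNormSq (1 / (2 * (t₁ - t₀))) r₀ R (fun r => e r t₀) ≤
        gaussianNormSq (1 / (2 * (t₁ + a - t₀))) r₀ R (fun r => e r t₀) ∧
      (t₁ + a - t₀) * gaussianEnergy (1 / (2 * (t₁ + a - t₀))) r₀ c R (fun r => e r t₀)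
          (fun r => p r t₀) / gaussianNormSq (1 / (2 * (t₁ + a - t₀))) r₀ R (fun r => e r t₀) ≤
        (t₁ + 1 - t₀) * gaussianEnergy 0 r₀ c R (fun r => e r t₀) (fun r => p r t₀) /
          gaussianNormSq (1 / (2 * (t₁ - t₀))) r₀ R fun r => e r t₀ := by
  have hslice := h.slice t₀ ht₀
  have hpole : 0 < t₁ + a - t₀ := by linarith [ha.1]
  have hH : gaussianNormSq (1 / (2 * (t₁ - t₀))) r₀ R (fun r => e r t₀) ≤
      gaussianNormSq (1 / (2 * (t₁ + a - t₀))) r₀ R (fun r => e r t₀) :=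
    weightedInner_gaussianWeight_antitone hR
      (.mul BesselSlice.contBddOn_id hslice.contBddOn_e)
      (one_div_le_one_div_of_le (by linarith) (by linarith [ha.1]))
  have hα : 0 ≤ 1 / (2 * (t₁ + a - t₀)) := by positivity
  have hD : gaussianEnergy (1 / (2 * (t₁ + a - t₀))) r₀ c R (fun r => e r t₀) (fun r => p r t₀) ≤
      gaussianEnergy 0 r₀ c R (fun r => e r t₀) fun r => p r t₀ :=
    add_le_add (weightedInner_gaussianWeight_antitone hR hslice.contBddOn_p hα)
      (mul_le_mul_of_nonneg_left
        (weightedInner_gaussianWeight_antitone hR hslice.contBddOn_e hα) hc)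
  have hD₀ := BesselSlice.gaussianEnergy_nonneg hR hc (α := 0) (r₀ := r₀) (e := fun r => e r t₀)
    (p := fun r => p r t₀)
  exact ⟨hH, div_le_div₀ (mul_nonneg (by linarith) hD₀)
    (mul_le_mul (by linarith [ha.2]) hD (BesselSlice.gaussianEnergy_nonneg hR hc) (by linarith))
    hpos hH⟩

theorem exists_le_gaussianNormSq (h : BesselFlow R c Λ τ₁ τ₂ e p p' f q) (hR : 0 < R) (hc : 0 ≤ c)
    (hΛ : 0 ≤ Λ) (hr₀ : r₀ ∈ Icc 0 R) (ht₀ : τ₁ < t₀) (ht : t₀ < t₁) (ht₁ : t₁ < τ₂) {r : ℝ}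
    (hr : r ∈ Icc 0 R) (hne : e r t₀ ≠ 0) :
    ∃ M : ℕ, ∃ η > 0, ∀ a ∈ Ioc (0 : ℝ) 1,
      η * a ^ M ≤ gaussianNormSq (1 / (2 * a)) r₀ R fun r => e r t₁ := by
  have hmem : t₀ ∈ Ioo τ₁ τ₂ := ⟨ht₀, ht.trans ht₁⟩
  have hslice := h.slice t₀ hmem
  have hr_ne : r ≠ 0 := fun hr0 => hne (hr0 ▸ hslice.e_zero)
  have hpos : 0 < gaussianNormSq (1 / (2 * (t₁ - t₀))) r₀ R fun r => e r t₀ :=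
    gaussianNormSq_pos hR hslice.continuousOn_e hr (mul_ne_zero hr_ne hne)
  obtain ⟨M, hM⟩ := exists_nat_ge ((2 + Λ) * ((t₁ + 1 - t₀) *
    gaussianEnergy 0 r₀ c R (fun r => e r t₀) (fun r => p r t₀) /
      gaussianNormSq (1 / (2 * (t₁ - t₀))) r₀ R (fun r => e r t₀) *
        Real.exp (Λ / 2 * (t₁ - t₀))) + 1 / 2)
  refine ⟨M, _, mul_pos hpos (Real.exp_pos (t₀ - t₁ - M * Real.log (t₁ + 1 - t₀))), fun a ha => ?_⟩
  obtain ⟨hH, hN⟩ := h.frequency_initial_le (r₀ := r₀) hR.le hc hmem ht ha hpos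
  have hM' := (add_le_add_left (mul_le_mul_of_nonneg_left (mul_le_mul_of_nonneg_right hN
    (Real.exp_pos (Λ / 2 * (t₁ - t₀))).le) (by linarith : 0 ≤ 2 + Λ)) (1 / 2)).trans hM
  have hgrowth := (h.frequencyBounds hc hr₀ ht₀ ht₁ (lt_add_of_pos_right t₁ ha.1)).normSq_mul_exp_le
    hΛ ht.le (lt_add_of_pos_right t₁ ha.1) (hpos.trans_le hH) (M := M) hM'
  rw [add_sub_cancel_left] at hgrowth
  have hpow : a ^ M = Real.exp (M * Real.log a) := by rw [Real.exp_nat_mul, Real.exp_log ha.1]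
  calc gaussianNormSq (1 / (2 * (t₁ - t₀))) r₀ R (fun r => e r t₀) *
        Real.exp (t₀ - t₁ - M * Real.log (t₁ + 1 - t₀)) * a ^ M
      ≤ gaussianNormSq (1 / (2 * (t₁ + a - t₀))) r₀ R (fun r => e r t₀) *
        Real.exp (t₀ - t₁ - M * Real.log (t₁ + a - t₀)) * a ^ M := by
        have hpole : 0 < t₁ + a - t₀ := by linarith [ha.1]
        have hpole_le : t₁ + a - t₀ ≤ t₁ + 1 - t₀ := by linarith [ha.2]
        have hH_nonneg := hpos.le.trans hH
        have ha' := ha.1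
        gcongr
    _ = gaussianNormSq (1 / (2 * (t₁ + a - t₀))) r₀ R (fun r => e r t₀) *
        Real.exp (t₀ - M * Real.log (t₁ + a - t₀)) * Real.exp (M * Real.log a - t₁) := by
        rw [hpow, mul_assoc, mul_assoc, ← Real.exp_add, ← Real.exp_add]
        ring_nf
    _ ≤ gaussianNormSq (1 / (2 * a)) r₀ R (fun r => e r t₁) * Real.exp (t₁ - M * Real.log a) *
        Real.exp (M * Real.log a - t₁) :=
        mul_le_mul_of_nonneg_right hgrowth (Real.exp_pos _).le
    _ = gaussianNormSq (1 / (2 * a)) r₀ R fun r => e r t₁ := by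
        rw [mul_assoc, ← Real.exp_add, sub_add_sub_cancel, sub_self, Real.exp_zero, mul_one]

theorem eq_zero_of_flat (h : BesselFlow R c Λ τ₁ τ₂ e p p' f q) (hR : 0 < R) (hc : 0 ≤ c)
    (hΛ : 0 ≤ Λ) (hr₀ : r₀ ∈ Icc 0 R) (ht₀ : τ₁ < t₀) (ht : t₀ < t₁) (ht₁ : t₁ < τ₂)
    (hflat : ∀ k : ℕ, ∃ B, ∀ r ∈ Icc 0 R, |r * e r t₁| ≤ B * |r - r₀| ^ k) :
    ∀ r ∈ Icc 0 R, e r t₀ = 0 := by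
  by_contra! hne
  obtain ⟨r, hr, hne⟩ := hne
  obtain ⟨M, η, hη, hlower⟩ := h.exists_le_gaussianNormSq hR hc hΛ hr₀ ht₀ ht ht₁ hr hne
  obtain ⟨B, hB⟩ := hflat (M + 1)
  have hupper {a : ℝ} (ha : 0 < a) := gaussianNormSq_le_of_flat hR.le
    (h.slice t₁ ⟨ht₀.trans ht, ht₁⟩).continuousOn_e hB ha
  set K := R * (B ^ 2 * ((M + 1).factorial * 4 ^ (M + 1)))
  have hK : 0 ≤ K := by positivity
  have ha : 0 < η / (K + η) := by positivity
  have ha1 : η / (K + η) ≤ 1 := (div_le_one (by positivity)).2 (by linarith)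
  have hle := (hlower _ ⟨ha, ha1⟩).trans (hupper ha)
  rw [pow_succ', ← mul_assoc, mul_le_mul_iff_left₀ (pow_pos ha M), ← mul_div_assoc,
    le_div_iff₀ (by positivity)] at hle
  nlinarith [pow_pos hη 2]

theorem gaussianNormSq_mul_exp_le (h : BesselFlow R c Λ τ₁ τ₂ e p p' f q) (hR : 0 ≤ R)
    (hc : 0 ≤ c) (hΛ : 0 ≤ Λ) (ht₀ : τ₁ < t₀) (ht : t₀ ≤ t₁) (ht₁ : t₁ < τ₂) (hT : t₁ < T) :
    gaussianNormSq (1 / (2 * (T - t₁))) r₀ R (fun r => e r t₁) * Real.exp (-(Λ / 2 * t₁)) ≤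
      gaussianNormSq (1 / (2 * (T - t₀))) r₀ R (fun r => e r t₀) * Real.exp (-(Λ / 2 * t₀)) := by
  have hd : ∀ t ∈ Icc t₀ t₁, HasDerivAt
      (fun s => gaussianNormSq (1 / (2 * (T - s))) r₀ R (fun r => e r s) *
        Real.exp (-(Λ / 2 * s)))
      ((gaussianNormSqDeriv (1 / (2 * (T - t))) r₀ R (fun r => r * e r t) (fun r => r * f r t) -
        Λ / 2 * gaussianNormSq (1 / (2 * (T - t))) r₀ R fun r => e r t) *
          Real.exp (-(Λ / 2 * t))) t := fun t ht => by
    refine (h.hasDerivAt_gaussianNormSq hR ⟨ht₀.trans_le ht.1, ht.2.trans_lt ht₁⟩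
      (ht.2.trans_lt hT)).mul ((hasDerivAt_id t).const_mul (Λ / 2)).neg.exp |>.congr_deriv ?_
    simp only [Pi.neg_apply, id_eq]
    ring
  refine antitoneOn_of_hasDerivWithinAt_nonpos (convex_Icc t₀ t₁)
    (fun t ht => (hd t ht).continuousAt.continuousWithinAt)
    (fun t ht => (hd t (interior_subset ht)).hasDerivWithinAt) (fun t ht => ?_)
    (left_mem_Icc.2 ht) (right_mem_Icc.2 ht) ht
  have ht := interior_subset ht
  have hα : 0 ≤ 1 / (2 * (T - t)) := one_div_nonneg.2 (by linarith [ht.2])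
  exact mul_nonpos_of_nonpos_of_nonneg (sub_nonpos.2
    ((h.slice t ⟨ht₀.trans_le ht.1, ht.2.trans_lt ht₁⟩).gaussianNormSqDeriv_le hR hc hα hΛ))
    (Real.exp_pos _).le

theorem eq_zero_of_initial_eq_zero (h : BesselFlow R c Λ τ₁ τ₂ e p p' f q) (hR : 0 < R)
    (hc : 0 ≤ c) (hΛ : 0 ≤ Λ) (ht₀ : τ₁ < t₀) (ht : t₀ ≤ t₁) (ht₁ : t₁ < τ₂)
    (hzero : ∀ r ∈ Icc 0 R, e r t₀ = 0) : ∀ r ∈ Icc 0 R, e r t₁ = 0 := by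
  have hslice := h.slice t₁ ⟨ht₀.trans_le ht, ht₁⟩
  have hinitial : gaussianNormSq (1 / (2 * (τ₂ - t₀))) 0 R (fun r => e r t₀) = 0 := by
    rw [gaussianNormSq, weightedInner,
      intervalIntegral.integral_congr (g := fun _ => 0) fun r hr => ?_,
      intervalIntegral.integral_zero]
    rw [uIcc_of_le hR.le] at hr
    simp only [hzero r hr, mul_zero, zero_mul]
  by_contra! hne
  obtain ⟨r, hr, hne⟩ := hne
  have hr_ne : r ≠ 0 := fun hr0 => hne (hr0 ▸ hslice.e_zero)
  have hpos := gaussianNormSq_pos (α := 1 / (2 * (τ₂ - t₁))) (r₀ := 0) hR hslice.continuousOn_e hr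
    (mul_ne_zero hr_ne hne)
  have hle := h.gaussianNormSq_mul_exp_le (r₀ := 0) hR.le hc hΛ ht₀ ht ht₁ ht₁
  rw [hinitial, zero_mul] at hle
  exact hle.not_gt (mul_pos hpos (Real.exp_pos _))

end BesselFlow

end UniqueContinuation

section Slab

/-- `f` is smooth on `[0, R] × (t₁, t₂)`, up to the lateral boundary. -/
def SmoothOnSlab (R t₁ t₂ : ℝ) (f : ℝ → ℝ → ℝ) : Prop :=
  ContDiffOn ℝ (⊤ : ℕ∞) (fun x : ℝ × ℝ => f x.1 x.2) (Icc 0 R ×ˢ Ioo t₁ t₂)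

/-- The radial derivative `f_r` of a function on `[0, R] × (t₁, t₂)`, one-sided at `r = 0` and
`r = R`. -/
noncomputable def radialDeriv (R : ℝ) (f : ℝ → ℝ → ℝ) (r t : ℝ) : ℝ :=
  derivWithin (fun s => f s t) (Icc 0 R) r

/-- The time derivative `f_t`. -/
noncomputable def timeDeriv (f : ℝ → ℝ → ℝ) (r t : ℝ) : ℝ :=
  deriv (f r) t

variable {R t₁ t₂ τ₁ τ₂ r t : ℝ} {f : ℝ → ℝ → ℝ}

theorem radialDeriv_eq_of_hasDerivWithinAt {f' : ℝ} (hR : 0 < R) (hr : r ∈ Icc 0 R)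
    (h : HasDerivWithinAt (fun s => f s t) f' (Icc 0 R) r) : radialDeriv R f r t = f' :=
  h.derivWithin (uniqueDiffOn_Icc hR r hr)

theorem radialDeriv_congr {g : ℝ → ℝ → ℝ} (hr : r ∈ Icc 0 R) (h : ∀ s ∈ Icc 0 R, f s t = g s t) :
    radialDeriv R f r t = radialDeriv R g r t :=
  derivWithin_congr h (h r hr)

theorem radialDeriv_eq_deriv (hr : r ∈ Ioo 0 R) : radialDeriv R f r t = deriv (fun s => f s t) r :=
  derivWithin_of_mem_nhds (Icc_mem_nhds hr.1 hr.2)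

theorem timeDeriv_eq_zero (ht : t ∈ Ioo t₁ t₂) (h : ∀ s ∈ Ioo t₁ t₂, f r s = 0) :
    timeDeriv f r t = 0 :=
  ((hasDerivAt_const t 0).congr_of_eventuallyEq
    (by filter_upwards [Ioo_mem_nhds ht.1 ht.2] with s hs using h s hs)).deriv

namespace SmoothOnSlab

theorem contDiffOn_radial (h : SmoothOnSlab R t₁ t₂ f) (ht : t ∈ Ioo t₁ t₂) :
    ContDiffOn ℝ (⊤ : ℕ∞) (fun r => f r t) (Icc 0 R) :=
  ContDiffOn.comp h (contDiff_id.prodMk contDiff_const).contDiffOn fun _ hr => ⟨hr, ht⟩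

theorem continuousOn_radial (h : SmoothOnSlab R t₁ t₂ f) (ht : t ∈ Ioo t₁ t₂) :
    ContinuousOn (fun r => f r t) (Icc 0 R) :=
  (h.contDiffOn_radial ht).continuousOn

theorem continuousOn_time (h : SmoothOnSlab R t₁ t₂ f) (hr : r ∈ Icc 0 R) :
    ContinuousOn (f r) (Ioo t₁ t₂) :=
  h.continuousOn.comp (continuousOn_const.prodMk continuousOn_id) fun _ ht => ⟨hr, ht⟩

theorem exists_abs_le (h : SmoothOnSlab R t₁ t₂ f) (hτ₁ : t₁ < τ₁) (hτ₂ : τ₂ < t₂) :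
    ∃ K, ∀ r ∈ Icc 0 R, ∀ t ∈ Icc τ₁ τ₂, |f r t| ≤ K := by
  obtain ⟨K, hK⟩ := (isCompact_Icc.prod isCompact_Icc).exists_bound_of_continuousOn
    (h.continuousOn.mono (prod_mono_right (Icc_subset_Ioo hτ₁ hτ₂)))
  exact ⟨K, fun r hr t ht => hK (r, t) ⟨hr, ht⟩⟩

theorem hasDerivWithinAt (h : SmoothOnSlab R t₁ t₂ f) (hr : r ∈ Icc 0 R) (ht : t ∈ Ioo t₁ t₂) :
    HasDerivWithinAt (fun s => f s t) (radialDeriv R f r t) (Icc 0 R) r :=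
  ((h.contDiffOn_radial ht).differentiableOn (by simp) r hr).hasDerivWithinAt

theorem hasDerivAt_radial (h : SmoothOnSlab R t₁ t₂ f) (hr : r ∈ Ioo 0 R) (ht : t ∈ Ioo t₁ t₂) :
    HasDerivAt (fun s => f s t) (radialDeriv R f r t) r :=
  (h.hasDerivWithinAt (Ioo_subset_Icc_self hr) ht).hasDerivAt (Icc_mem_nhds hr.1 hr.2)

theorem hasFDerivWithinAt (h : SmoothOnSlab R t₁ t₂ f) (hr : r ∈ Icc 0 R) (ht : t ∈ Ioo t₁ t₂) :
    HasFDerivWithinAt (fun x : ℝ × ℝ => f x.1 x.2)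
      (fderivWithin ℝ (fun x : ℝ × ℝ => f x.1 x.2) (Icc 0 R ×ˢ Ioo t₁ t₂) (r, t))
      (Icc 0 R ×ˢ Ioo t₁ t₂) (r, t) :=
  (h.differentiableOn (by simp) (r, t) ⟨hr, ht⟩).hasFDerivWithinAt

theorem radialDeriv_eqOn_fderivWithin (h : SmoothOnSlab R t₁ t₂ f) (hR : 0 < R) :
    EqOn (fun x : ℝ × ℝ => radialDeriv R f x.1 x.2)
      (fun x => fderivWithin ℝ (fun x : ℝ × ℝ => f x.1 x.2) (Icc 0 R ×ˢ Ioo t₁ t₂) x (1, 0))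
      (Icc 0 R ×ˢ Ioo t₁ t₂) := fun x hx => by
  have hmaps : MapsTo (fun s => (s, x.2)) (Icc 0 R) (Icc 0 R ×ˢ Ioo t₁ t₂) := fun _ hs => ⟨hs, hx.2⟩
  have hchain := (h.hasFDerivWithinAt hx.1 hx.2).comp_hasDerivWithinAt x.1
    ((hasDerivWithinAt_id x.1 _).prodMk (hasDerivWithinAt_const x.1 _ x.2)) hmaps
  exact radialDeriv_eq_of_hasDerivWithinAt hR hx.1 hchain

theorem hasDerivAt_fderivWithin (h : SmoothOnSlab R t₁ t₂ f) (hr : r ∈ Icc 0 R)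
    (ht : t ∈ Ioo t₁ t₂) :
    HasDerivAt (f r)
      (fderivWithin ℝ (fun x : ℝ × ℝ => f x.1 x.2) (Icc 0 R ×ˢ Ioo t₁ t₂) (r, t) (0, 1)) t :=
  ((h.hasFDerivWithinAt hr ht).comp_hasDerivWithinAt t
    ((hasDerivWithinAt_const t _ r).prodMk (hasDerivWithinAt_id t _))
    fun _ hs => ⟨hr, hs⟩).hasDerivAt (Ioo_mem_nhds ht.1 ht.2)

theorem hasDerivAt_time (h : SmoothOnSlab R t₁ t₂ f) (hr : r ∈ Icc 0 R) (ht : t ∈ Ioo t₁ t₂) :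
    HasDerivAt (f r) (timeDeriv f r t) t :=
  (h.hasDerivAt_fderivWithin hr ht).differentiableAt.hasDerivAt

theorem timeDeriv_eqOn_fderivWithin (h : SmoothOnSlab R t₁ t₂ f) :
    EqOn (fun x : ℝ × ℝ => timeDeriv f x.1 x.2)
      (fun x => fderivWithin ℝ (fun x : ℝ × ℝ => f x.1 x.2) (Icc 0 R ×ˢ Ioo t₁ t₂) x (0, 1))
      (Icc 0 R ×ˢ Ioo t₁ t₂) := fun _ hx => (h.hasDerivAt_fderivWithin hx.1 hx.2).deriv

theorem uniqueDiffOn (hR : 0 < R) (t₁ t₂ : ℝ) : UniqueDiffOn ℝ (Icc 0 R ×ˢ Ioo t₁ t₂) :=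
  (uniqueDiffOn_Icc hR).prod (uniqueDiffOn_Ioo t₁ t₂)

theorem contDiffOn_fderivWithin (h : SmoothOnSlab R t₁ t₂ f) (hR : 0 < R) :
    ContDiffOn ℝ (⊤ : ℕ∞)
      (fderivWithin ℝ (fun x : ℝ × ℝ => f x.1 x.2) (Icc 0 R ×ˢ Ioo t₁ t₂))
      (Icc 0 R ×ˢ Ioo t₁ t₂) :=
  ContDiffOn.fderivWithin h (uniqueDiffOn hR t₁ t₂) (by simp)

protected theorem radialDeriv (h : SmoothOnSlab R t₁ t₂ f) (hR : 0 < R) :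
    SmoothOnSlab R t₁ t₂ (radialDeriv R f) :=
  ((h.contDiffOn_fderivWithin hR).clm_apply contDiffOn_const).congr
    (h.radialDeriv_eqOn_fderivWithin hR)

protected theorem timeDeriv (h : SmoothOnSlab R t₁ t₂ f) (hR : 0 < R) :
    SmoothOnSlab R t₁ t₂ (timeDeriv f) :=
  ((h.contDiffOn_fderivWithin hR).clm_apply contDiffOn_const).congr
    h.timeDeriv_eqOn_fderivWithin

theorem fderivWithin_fderivWithin_apply (h : SmoothOnSlab R t₁ t₂ f) (hR : 0 < R)
    (hr : r ∈ Icc 0 R) (ht : t ∈ Ioo t₁ t₂) (ξ η : ℝ × ℝ) :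
    fderivWithin ℝ (fun x => fderivWithin ℝ (fun x : ℝ × ℝ => f x.1 x.2)
        (Icc 0 R ×ˢ Ioo t₁ t₂) x ξ) (Icc 0 R ×ˢ Ioo t₁ t₂) (r, t) η =
      fderivWithin ℝ (fderivWithin ℝ (fun x : ℝ × ℝ => f x.1 x.2) (Icc 0 R ×ˢ Ioo t₁ t₂))
        (Icc 0 R ×ˢ Ioo t₁ t₂) (r, t) η ξ := by
  have hd := ((h.contDiffOn_fderivWithin hR).differentiableOn (by simp) (r, t)
    ⟨hr, ht⟩).hasFDerivWithinAt
  rw [(hd.clm_apply (hasFDerivWithinAt_const ξ (r, t) _)).fderivWithin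
    (uniqueDiffOn hR t₁ t₂ (r, t) ⟨hr, ht⟩)]
  simp

theorem timeDeriv_radialDeriv (h : SmoothOnSlab R t₁ t₂ f) (hR : 0 < R) (hr : r ∈ Icc 0 R)
    (ht : t ∈ Ioo t₁ t₂) :
    timeDeriv (radialDeriv R f) r t =
      radialDeriv R (timeDeriv f) r t := by
  have hmem : (r, t) ∈ Icc 0 R ×ˢ Ioo t₁ t₂ := ⟨hr, ht⟩
  have hclosure : (r, t) ∈ closure (interior (Icc 0 R ×ˢ Ioo t₁ t₂)) := by
    rw [interior_prod_eq, closure_prod_eq, interior_Icc, interior_Ioo, closure_Ioo hR.ne]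
    exact ⟨hr, subset_closure ht⟩
  have hsymm := ContDiffWithinAt.isSymmSndFDerivWithinAt (h _ hmem)
    (by simpa using WithTop.coe_le_coe.2 (le_top : (2 : ℕ∞) ≤ ⊤)) (uniqueDiffOn hR t₁ t₂)
    hclosure hmem
  have hradial := h.radialDeriv_eqOn_fderivWithin hR
  have htime := h.timeDeriv_eqOn_fderivWithin
  refine ((h.radialDeriv hR).timeDeriv_eqOn_fderivWithin hmem).trans (Eq.trans ?_
    ((h.timeDeriv hR).radialDeriv_eqOn_fderivWithin hR hmem).symm)
  dsimp only
  rw [fderivWithin_congr hradial (hradial hmem), fderivWithin_congr htime (htime hmem),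
    h.fderivWithin_fderivWithin_apply hR hr ht, h.fderivWithin_fderivWithin_apply hR hr ht]
  exact hsymm (0, 1) (1, 0)

theorem abs_sub_le {K s : ℝ} (h : SmoothOnSlab R t₁ t₂ f) (ht : t ∈ Ioo t₁ t₂)
    (hK : ∀ r ∈ Icc 0 R, |radialDeriv R f r t| ≤ K) (hr : r ∈ Icc 0 R)
    (hs : s ∈ Icc 0 R) : |f s t - f r t| ≤ K * |s - r| :=
  (convex_Icc 0 R).norm_image_sub_le_of_norm_hasDerivWithin_le
    (fun _ hr => h.hasDerivWithinAt hr ht) hK hr hs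

theorem exists_abs_le_mul (h : SmoothOnSlab R t₁ t₂ f) (hR : 0 < R) (hτ₁ : t₁ < τ₁)
    (hτ₂ : τ₂ < t₂) (h0 : ∀ t ∈ Ioo t₁ t₂, f 0 t = 0) :
    ∃ K, ∀ r ∈ Icc 0 R, ∀ t ∈ Icc τ₁ τ₂, |f r t| ≤ K * r := by
  obtain ⟨K, hK⟩ := (h.radialDeriv hR).exists_abs_le hτ₁ hτ₂
  refine ⟨K, fun r hr t ht => ?_⟩
  have ht' := Icc_subset_Ioo hτ₁ hτ₂ ht
  simpa only [h0 t ht', sub_zero, abs_of_nonneg hr.1] using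
    h.abs_sub_le ht' (fun s hs => hK s hs t ht) (left_mem_Icc.2 hR.le) hr

end SmoothOnSlab

end Slab

section InfiniteOrderVanishing

variable {a b x₀ : ℝ} {φ : ℝ → ℝ}

theorem exists_derivWithin_eq_zero {x y : ℝ} (hφ : DifferentiableOn ℝ φ (Icc a b))
    (hx : x ∈ Icc a b) (hy : y ∈ Icc a b) (hxy : x < y) (h : φ x = φ y) :
    ∃ z ∈ Ioo x y, derivWithin φ (Icc a b) z = 0 := by
  have hsub : Icc x y ⊆ Icc a b := Icc_subset_Icc hx.1 hy.2
  obtain ⟨z, hz, hdz⟩ := exists_deriv_eq_zero hxy (hφ.continuousOn.mono hsub) h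
  rw [← derivWithin_of_mem_nhds (Icc_mem_nhds (hx.1.trans_lt hz.1) (hz.2.trans_le hy.2))] at hdz
  exact ⟨z, hz, hdz⟩

theorem eq_zero_of_accPt_zeros (hφ : ContinuousOn φ (Icc a b))
    (hacc : AccPt x₀ (𝓟 {x ∈ Icc a b | φ x = 0})) : φ x₀ = 0 := by
  have hclosed : IsClosed (Icc a b ∩ φ ⁻¹' {0}) :=
    hφ.preimage_isClosed_of_isClosed isClosed_Icc isClosed_singleton
  exact (hclosed.closure_eq ▸ hacc.clusterPt.mem_closure : x₀ ∈ Icc a b ∩ φ ⁻¹' {0}).2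

theorem accPt_zeros_derivWithin (hφ : DifferentiableOn ℝ φ (Icc a b)) (hx₀ : x₀ ∈ Icc a b)
    (hacc : AccPt x₀ (𝓟 {x ∈ Icc a b | φ x = 0})) :
    AccPt x₀ (𝓟 {x ∈ Icc a b | derivWithin φ (Icc a b) x = 0}) := by
  have hφx₀ := eq_zero_of_accPt_zeros hφ.continuousOn hacc
  rw [accPt_iff_nhds] at hacc ⊢
  intro U hU
  obtain ⟨ε, hε, hball⟩ := Metric.mem_nhds_iff.1 hU
  obtain ⟨x, ⟨hxε, hx, hφx⟩, hne⟩ := hacc _ (Metric.ball_mem_nhds x₀ hε)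
  have hconv := (convex_ball x₀ ε).ordConnected.out
  have hx₀ε := Metric.mem_ball_self (x := x₀) hε
  rcases hne.lt_or_gt with hlt | hlt
  · obtain ⟨z, hz, hdz⟩ := exists_derivWithin_eq_zero hφ hx hx₀ hlt (hφx.trans hφx₀.symm)
    exact ⟨z, ⟨hball (hconv hxε hx₀ε (Ioo_subset_Icc_self hz)), ⟨hx.1.trans hz.1.le,
      hz.2.le.trans hx₀.2⟩, hdz⟩, hz.2.ne⟩
  · obtain ⟨z, hz, hdz⟩ := exists_derivWithin_eq_zero hφ hx₀ hx hlt (hφx₀.trans hφx.symm)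
    exact ⟨z, ⟨hball (hconv hx₀ε hxε (Ioo_subset_Icc_self hz)), ⟨hx₀.1.trans hz.1.le,
      hz.2.le.trans hx.2⟩, hdz⟩, hz.1.ne'⟩

theorem abs_le_mul_pow_succ {B : ℝ} {k : ℕ} (hφ : DifferentiableOn ℝ φ (Icc a b))
    (hx₀ : x₀ ∈ Icc a b) (hφx₀ : φ x₀ = 0)
    (hB : ∀ x ∈ Icc a b, |derivWithin φ (Icc a b) x| ≤ B * |x - x₀| ^ k) :
    ∀ x ∈ Icc a b, |φ x| ≤ |B| * |x - x₀| ^ (k + 1) := fun x hx => by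
  have hsub : uIcc x₀ x ⊆ Icc a b := uIcc_subset_Icc hx₀ hx
  have hmvt := (convex_uIcc x₀ x).norm_image_sub_le_of_norm_hasDerivWithin_le
    (C := |B| * |x - x₀| ^ k) (fun y hy => ((hφ y (hsub hy)).hasDerivWithinAt).mono hsub)
    (fun y hy => (hB y (hsub hy)).trans (by
      have hdist := abs_sub_left_of_mem_uIcc hy
      gcongr
      exact le_abs_self B)) left_mem_uIcc right_mem_uIcc
  rwa [hφx₀, sub_zero, Real.norm_eq_abs, Real.norm_eq_abs, mul_assoc, ← pow_succ] at hmvt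

theorem exists_abs_le_mul_pow (hab : a < b) (hφ : ContDiffOn ℝ (⊤ : ℕ∞) φ (Icc a b))
    (hx₀ : x₀ ∈ Icc a b) (hacc : AccPt x₀ (𝓟 {x ∈ Icc a b | φ x = 0})) (k : ℕ) :
    ∃ B, ∀ x ∈ Icc a b, |φ x| ≤ B * |x - x₀| ^ k := by
  induction k generalizing φ with
  | zero =>
    simpa only [pow_zero, mul_one, Real.norm_eq_abs] using
      isCompact_Icc.exists_bound_of_continuousOn hφ.continuousOn
  | succ k ih =>
    have hdiff := hφ.differentiableOn (by simp)
    obtain ⟨B, hB⟩ := ih (hφ.derivWithin (uniqueDiffOn_Icc hab) (by simp))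
      (accPt_zeros_derivWithin hdiff hx₀ hacc)
    exact ⟨|B|, abs_le_mul_pow_succ hdiff hx₀ (eq_zero_of_accPt_zeros hφ.continuousOn hacc) hB⟩

end InfiniteOrderVanishing

section LiouvilleSubstitution

variable {μ q β R t₁ t₂ τ₁ τ₂ C L r t : ℝ}

theorem abs_rpow_sub_one_mul_le (hr : 0 ≤ r) (hq : 0 < q) {x : ℝ} (hx : |x| ≤ L * r) :
    |r ^ (q - 1) * x| ≤ L * r ^ q := by
  rcases hr.eq_or_lt with rfl | hr
  · rw [abs_nonpos_iff.1 (hx.trans_eq (mul_zero L)), Real.zero_rpow hq.ne', mul_zero, mul_zero,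
      abs_zero]
  · have hpos : 0 < r ^ (q - 1) := Real.rpow_pos_of_pos hr _
    rw [abs_mul, abs_of_pos hpos]
    refine (mul_le_mul_of_nonneg_left hx hpos.le).trans_eq ?_
    rw [Real.rpow_sub_one hr.ne']
    field_simp

theorem contBddOn_rpow_sub_one_mul {X : Type*} [TopologicalSpace X] {s : Set X} {ρ g : X → ℝ}
    (hq : 0 < q) (hρ : ContinuousOn ρ s) (hg : ContinuousOn g s) (hmaps : MapsTo ρ s (Ioo 0 R))
    (hL : ∀ x ∈ s, |g x| ≤ L * ρ x) : ContBddOn (fun x => ρ x ^ (q - 1) * g x) s := by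
  refine ⟨(hρ.rpow_const fun x hx => .inl (hmaps hx).1.ne').mul hg, |L| * R ^ q, fun x hx => ?_⟩
  have hx' := hmaps hx
  calc |ρ x ^ (q - 1) * g x| ≤ L * ρ x ^ q := abs_rpow_sub_one_mul_le hx'.1.le hq (hL x hx)
    _ ≤ |L| * R ^ q := mul_le_mul (le_abs_self L) (Real.rpow_le_rpow hx'.1.le hx'.2.le hq.le)
        (Real.rpow_nonneg hx'.1.le q) (abs_nonneg L)

open scoped Topology in
theorem continuousOn_rpow_sub_one_mul {g : ℝ → ℝ} (hq : 0 < q) (hg : ContinuousOn g (Icc 0 R))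
    (hL : ∀ r ∈ Icc 0 R, |g r| ≤ L * r) :
    ContinuousOn (fun r => r ^ (q - 1) * g r) (Icc 0 R) := by
  intro r hr
  rcases hr.1.eq_or_lt with rfl | hr0
  · have hlim : Tendsto (fun r : ℝ => L * r ^ q) (𝓝[Icc 0 R] 0) (𝓝 0) := by
      have hcont : Continuous fun r : ℝ => L * r ^ q :=
        continuous_const.mul (Real.continuous_rpow_const hq.le)
      simpa [Real.zero_rpow hq.ne'] using (hcont.tendsto 0).mono_left nhdsWithin_le_nhds
    rw [ContinuousWithinAt, abs_nonpos_iff.1 ((hL 0 hr).trans_eq (mul_zero L)), mul_zero]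
    refine squeeze_zero_norm' ?_ hlim
    filter_upwards [self_mem_nhdsWithin] with s hs
    exact abs_rpow_sub_one_mul_le hs.1 hq (hL s hs)
  · exact (Real.continuousAt_rpow_const r _ (.inl hr0.ne')).continuousWithinAt.mul (hg r hr)

/-- The radial heat operator `v_t - v_rr - (μ / r) v_r + (β / r²) v`. -/
noncomputable def radialHeatOperator (μ β R : ℝ) (v : ℝ → ℝ → ℝ) (r t : ℝ) : ℝ :=
  timeDeriv v r t - radialDeriv R (radialDeriv R v) r t - μ / r * radialDeriv R v r t +
    β / r ^ 2 * v r t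

/-- The differential inequality `|v_t - v_rr - (μ / r) v_r + (β / r²) v| ≤ C (|v| / r + |v_r|)`,
with a constant that is uniform on compact time intervals. It allows for all lower order
perturbations of the radial heat equation, and is all that unique continuation needs. -/
def RadialHeatInequality (μ β R t₁ t₂ : ℝ) (v : ℝ → ℝ → ℝ) : Prop :=
  ∀ τ₁ τ₂, t₁ < τ₁ → τ₂ < t₂ → ∃ C, ∀ r ∈ Ioo 0 R, ∀ t ∈ Icc τ₁ τ₂,
    |radialHeatOperator μ β R v r t| ≤ C * (|v r t| / r + |radialDeriv R v r t|)

/-- A smooth solution of the radial heat inequality that vanishes at `r = 0` and at `r = R`. -/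
structure IsDirichletRadialHeat (μ β R t₁ t₂ : ℝ) (w : ℝ → ℝ → ℝ) : Prop where
  smooth : SmoothOnSlab R t₁ t₂ w
  inequality : RadialHeatInequality μ β R t₁ t₂ w
  zero_left : ∀ t ∈ Ioo t₁ t₂, w 0 t = 0
  zero_right : ∀ t ∈ Ioo t₁ t₂, w R t = 0

theorem sq_le_mul_add_sq {c x y z C q : ℝ} (hc : 0 < c) (hz : |z| ≤ C * ((1 + q) * |x| + |y|)) :
    z ^ 2 ≤ C ^ 2 * (1 + (1 + q) ^ 2 / c) * (y ^ 2 + c * x ^ 2) := by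
  have hcauchy : ((1 + q) * |x| + |y|) ^ 2 ≤ (1 + (1 + q) ^ 2 / c) * (y ^ 2 + c * x ^ 2) := by
    have hid : (1 + (1 + q) ^ 2 / c) * (y ^ 2 + c * x ^ 2) - ((1 + q) * |x| + |y|) ^ 2 =
        (c * |x| - (1 + q) * |y|) ^ 2 / c := by
      rw [← sq_abs x, ← sq_abs y]
      field_simp
      ring
    linarith [show 0 ≤ (c * |x| - (1 + q) * |y|) ^ 2 / c by positivity]
  calc z ^ 2 = |z| ^ 2 := (sq_abs z).symm
    _ ≤ (C * ((1 + q) * |x| + |y|)) ^ 2 := pow_le_pow_left₀ (abs_nonneg z) hz 2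
    _ = C ^ 2 * ((1 + q) * |x| + |y|) ^ 2 := mul_pow _ _ _
    _ ≤ C ^ 2 * ((1 + (1 + q) ^ 2 / c) * (y ^ 2 + c * x ^ 2)) := by gcongr
    _ = _ := (mul_assoc _ _ _).symm

theorem liouville_sq_residual_le {w w_r w_rr w_t : ℝ} (hr : 0 < r) (hq : 0 ≤ q) (hC : 0 ≤ C)
    (hc : 0 < q ^ 2 - q + β)
    (h : |w_t - w_rr - 2 * q / r * w_r + β / r ^ 2 * w| ≤ C * (|w| / r + |w_r|)) :
    (r * (r ^ (q - 1) * w_t) - r ^ (q - 1) * (r * w_rr + 2 * q * w_r + (q ^ 2 - q) * (w / r)) +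
        (q ^ 2 - q + β) * (r ^ (q - 1) * w / r)) ^ 2 ≤
      C ^ 2 * (1 + (1 + q) ^ 2 / (q ^ 2 - q + β)) *
        ((r ^ (q - 1) * (r * w_r + q * w)) ^ 2 + (q ^ 2 - q + β) * (r ^ (q - 1) * w) ^ 2) := by
  have hres : r * (r ^ (q - 1) * w_t) -
      r ^ (q - 1) * (r * w_rr + 2 * q * w_r + (q ^ 2 - q) * (w / r)) +
        (q ^ 2 - q + β) * (r ^ (q - 1) * w / r) =
      r ^ (q - 1) * (r * (w_t - w_rr - 2 * q / r * w_r + β / r ^ 2 * w)) := by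
    field_simp
    ring
  have hpos : 0 < r ^ (q - 1) := Real.rpow_pos_of_pos hr _
  have hw_r : r * |w_r| ≤ |r * w_r + q * w| + q * |w| := by
    simpa only [add_sub_cancel_right, abs_mul, abs_of_pos hr, abs_of_nonneg hq] using
      abs_sub (r * w_r + q * w) (q * w)
  refine sq_le_mul_add_sq hc ?_
  rw [hres, abs_mul, abs_mul, abs_mul, abs_mul, abs_of_pos hpos, abs_of_pos hr]
  calc r ^ (q - 1) * (r * |w_t - w_rr - 2 * q / r * w_r + β / r ^ 2 * w|)
      ≤ r ^ (q - 1) * (r * (C * (|w| / r + |w_r|))) := by gcongr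
    _ = C * (r ^ (q - 1) * (|w| + r * |w_r|)) := by
        field_simp
    _ ≤ C * (r ^ (q - 1) * (|w| + (|r * w_r + q * w| + q * |w|))) := by gcongr
    _ = C * ((1 + q) * (r ^ (q - 1) * |w|) + r ^ (q - 1) * |r * w_r + q * w|) := by ring

theorem hasDerivAt_rpow_sub_one_mul {g : ℝ → ℝ} {g' : ℝ} (hr : 0 < r) (hg : HasDerivAt g g' r) :
    HasDerivAt (fun r => r ^ (q - 1) * g r) (r ^ (q - 1) * (g' + (q - 1) * (g r / r))) r := by
  refine ((Real.hasDerivAt_rpow_const (.inl hr.ne')).mul hg).congr_deriv ?_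
  rw [Real.rpow_sub_one hr.ne' (q - 1)]
  ring

namespace IsDirichletRadialHeat

variable {w : ℝ → ℝ → ℝ}

theorem exists_abs_le_mul (h : IsDirichletRadialHeat μ β R t₁ t₂ w) (hR : 0 < R) (hτ₁ : t₁ < τ₁)
    (hτ₂ : τ₂ < t₂) (q : ℝ) :
    ∃ L, ∀ t ∈ Ioo τ₁ τ₂, ∀ r ∈ Icc 0 R, |w r t| ≤ L * r ∧ |timeDeriv w r t| ≤ L * r ∧
      |r * radialDeriv R w r t + q * w r t| ≤ L * r ∧
      |r * radialDeriv R (timeDeriv w) r t + q * timeDeriv w r t| ≤ L * r := by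
  have hsub : Ioo τ₁ τ₂ ⊆ Icc τ₁ τ₂ := Ioo_subset_Icc_self
  obtain ⟨K₁, hK₁⟩ := h.smooth.exists_abs_le_mul hR hτ₁ hτ₂ h.zero_left
  obtain ⟨K₂, hK₂⟩ := (h.smooth.timeDeriv hR).exists_abs_le_mul hR hτ₁ hτ₂
    fun t ht => timeDeriv_eq_zero ht h.zero_left
  obtain ⟨K₃, hK₃⟩ := (h.smooth.radialDeriv hR).exists_abs_le hτ₁ hτ₂
  obtain ⟨K₄, hK₄⟩ := ((h.smooth.timeDeriv hR).radialDeriv hR).exists_abs_le hτ₁ hτ₂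
  have hcomb {r x y A B : ℝ} (hr : 0 ≤ r) (hx : |x| ≤ A) (hy : |y| ≤ B * r) :
      |r * x + q * y| ≤ (A + |q| * B) * r := by
    refine (abs_add_le _ _).trans ?_
    rw [abs_mul, abs_mul, abs_of_nonneg hr]
    nlinarith [mul_le_mul_of_nonneg_left hx hr, mul_le_mul_of_nonneg_left hy (abs_nonneg q)]
  have hmax {A B r x : ℝ} (hr : 0 ≤ r) (hx : |x| ≤ A * r) (hAB : A ≤ B) : |x| ≤ B * r :=
    hx.trans (mul_le_mul_of_nonneg_right hAB hr)
  refine ⟨max (max K₁ K₂) (max (K₃ + |q| * K₁) (K₄ + |q| * K₂)), fun t ht r hr => ?_⟩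
  have hw := hK₁ r hr t (hsub ht)
  have hw_t := hK₂ r hr t (hsub ht)
  exact ⟨hmax hr.1 hw (by simp), hmax hr.1 hw_t (by simp),
    hmax hr.1 (hcomb hr.1 (hK₃ r hr t (hsub ht)) hw) (by simp),
    hmax hr.1 (hcomb hr.1 (hK₄ r hr t (hsub ht)) hw_t) (by simp)⟩

end IsDirichletRadialHeat

end LiouvilleSubstitution

section LiouvilleFlow

variable {q β R t₁ t₂ τ₁ τ₂ C L r t : ℝ} {w : ℝ → ℝ → ℝ}

/-- The quotient `u / r` for the Liouville substitution `u = r ^ q w`, which removes the first order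
term of the radial heat operator with `μ = 2 q`. -/
noncomputable def liouvilleQuotient (q : ℝ) (w : ℝ → ℝ → ℝ) (r t : ℝ) : ℝ :=
  r ^ (q - 1) * w r t

/-- The radial derivative of `r ^ q w`. -/
noncomputable def liouvilleDeriv (q R : ℝ) (w : ℝ → ℝ → ℝ) (r t : ℝ) : ℝ :=
  r ^ (q - 1) * (r * radialDeriv R w r t + q * w r t)

/-- The second radial derivative of `r ^ q w`. -/
noncomputable def liouvilleDeriv₂ (q R : ℝ) (w : ℝ → ℝ → ℝ) (r t : ℝ) : ℝ :=
  r ^ (q - 1) * (r * radialDeriv R (radialDeriv R w) r t + 2 * q * radialDeriv R w r t +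
    (q ^ 2 - q) * (w r t / r))

theorem contBddOn_liouvilleQuotient_sq_div (hq : 1 / 2 ≤ q)
    (hw : ContinuousOn (fun r => w r t) (Icc 0 R)) (hL : ∀ r ∈ Icc 0 R, |w r t| ≤ L * r) :
    ContBddOn (fun r => liouvilleQuotient q w r t ^ 2 / r) (Ioo 0 R) := by
  have hq0 : 0 < q := by linarith
  refine ⟨(((continuousOn_rpow_sub_one_mul hq0 hw hL).mono Ioo_subset_Icc_self).pow 2).div
    continuousOn_id fun r hr => hr.1.ne', L ^ 2 * R ^ (2 * q - 1), fun r hr => ?_⟩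
  have hle := abs_rpow_sub_one_mul_le hr.1.le hq0 (hL r (Ioo_subset_Icc_self hr))
  rw [abs_div, abs_pow, abs_of_pos hr.1, div_le_iff₀ hr.1]
  calc |liouvilleQuotient q w r t| ^ 2 ≤ (L * r ^ q) ^ 2 := pow_le_pow_left₀ (abs_nonneg _) hle 2
    _ = L ^ 2 * r ^ (2 * q - 1) * r := by
        rw [Real.rpow_sub_one hr.1.ne', two_mul, Real.rpow_add hr.1]
        field_simp [hr.1.ne']
    _ ≤ L ^ 2 * R ^ (2 * q - 1) * r := by
        have hpow := Real.rpow_le_rpow hr.1.le hr.2.le (by linarith : 0 ≤ 2 * q - 1)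
        have hr0 := hr.1
        gcongr

theorem hasDerivAt_mul_liouvilleQuotient (hw : SmoothOnSlab R t₁ t₂ w) (hr : r ∈ Ioo 0 R)
    (ht : t ∈ Ioo t₁ t₂) :
    HasDerivAt (fun r => r * liouvilleQuotient q w r t) (liouvilleDeriv q R w r t) r := by
  refine ((hasDerivAt_id r).mul
    (hasDerivAt_rpow_sub_one_mul hr.1 (hw.hasDerivAt_radial hr ht))).congr_deriv ?_
  have hr0 := hr.1.ne'
  rw [liouvilleDeriv, id]
  field_simp
  ring

theorem hasDerivAt_liouvilleDeriv (hR : 0 < R) (hw : SmoothOnSlab R t₁ t₂ w) (hr : r ∈ Ioo 0 R)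
    (ht : t ∈ Ioo t₁ t₂) :
    HasDerivAt (fun r => liouvilleDeriv q R w r t) (liouvilleDeriv₂ q R w r t) r := by
  have hinner := ((hasDerivAt_id r).mul ((hw.radialDeriv hR).hasDerivAt_radial hr ht)).add
    ((hw.hasDerivAt_radial hr ht).const_mul q)
  refine (hasDerivAt_rpow_sub_one_mul hr.1 hinner).congr_deriv ?_
  have hr0 := hr.1.ne'
  rw [liouvilleDeriv₂]
  simp only [Pi.add_apply, Pi.mul_apply, id]
  field_simp
  ring

namespace SmoothOnSlab

theorem hasDerivAt_liouvilleQuotient_time (hw : SmoothOnSlab R t₁ t₂ w) (hr : r ∈ Icc 0 R)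
    (ht : t ∈ Ioo t₁ t₂) :
    HasDerivAt (liouvilleQuotient q w r) (liouvilleQuotient q (timeDeriv w) r t) t :=
  (hw.hasDerivAt_time hr ht).const_mul _

theorem hasDerivAt_liouvilleDeriv_time (hw : SmoothOnSlab R t₁ t₂ w) (hR : 0 < R)
    (hr : r ∈ Icc 0 R) (ht : t ∈ Ioo t₁ t₂) :
    HasDerivAt (liouvilleDeriv q R w r) (liouvilleDeriv q R (timeDeriv w) r t) t := by
  have hw_r := (hw.radialDeriv hR).hasDerivAt_time hr ht
  rw [hw.timeDeriv_radialDeriv hR hr ht] at hw_r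
  exact ((hw_r.const_mul r).add ((hw.hasDerivAt_time hr ht).const_mul q)).const_mul _

theorem continuousOn_liouvilleDeriv₂ (hw : SmoothOnSlab R t₁ t₂ w) (hR : 0 < R)
    (ht : t ∈ Ioo t₁ t₂) :
    ContinuousOn (fun r => liouvilleDeriv₂ q R w r t) (Ioo 0 R) := by
  have hne : ∀ r ∈ Ioo 0 R, r ≠ 0 := fun r hr => hr.1.ne'
  have h₀ := (hw.continuousOn_radial ht).mono Ioo_subset_Icc_self
  have h₁ := ((hw.radialDeriv hR).continuousOn_radial ht).mono Ioo_subset_Icc_self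
  have h₂ := (((hw.radialDeriv hR).radialDeriv hR).continuousOn_radial ht).mono Ioo_subset_Icc_self
  have hdiv := h₀.div continuousOn_id hne
  exact (continuousOn_id.rpow_const fun r hr => .inl (hne r hr)).mul
    (((continuousOn_id.mul h₂).add (continuousOn_const.mul h₁)).add (continuousOn_const.mul hdiv))

end SmoothOnSlab

namespace IsDirichletRadialHeat

theorem besselSlice (h : IsDirichletRadialHeat (2 * q) β R t₁ t₂ w) (hR : 0 < R) (hq : 1 / 2 ≤ q)
    (hc : 0 < q ^ 2 - q + β) (hC : 0 ≤ C) (ht : t ∈ Ioo t₁ t₂)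
    (hL : ∀ r ∈ Icc 0 R, |w r t| ≤ L * r ∧ |timeDeriv w r t| ≤ L * r ∧
      |r * radialDeriv R w r t + q * w r t| ≤ L * r ∧
      |r * radialDeriv R (timeDeriv w) r t + q * timeDeriv w r t| ≤ L * r)
    (hineq : ∀ r ∈ Ioo 0 R, |radialHeatOperator (2 * q) β R w r t| ≤
      C * (|w r t| / r + |radialDeriv R w r t|)) :
    BesselSlice R (q ^ 2 - q + β) (C ^ 2 * (1 + (1 + q) ^ 2 / (q ^ 2 - q + β)))
      (fun r => liouvilleQuotient q w r t) (fun r => liouvilleDeriv q R w r t)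
      (fun r => liouvilleDeriv₂ q R w r t) (fun r => liouvilleQuotient q (timeDeriv w) r t)
      fun r => liouvilleDeriv q R (timeDeriv w) r t := by
  have hq0 : 0 < q := by linarith
  have hw := h.smooth
  have hw_r := hw.radialDeriv hR
  have hw_t := hw.timeDeriv hR
  have hw_rt := hw_t.radialDeriv hR
  exact
  { continuousOn_e := continuousOn_rpow_sub_one_mul hq0 (hw.continuousOn_radial ht)
      fun r hr => (hL r hr).1
    continuousOn_p := continuousOn_rpow_sub_one_mul hq0
      ((continuousOn_id.mul (hw_r.continuousOn_radial ht)).add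
        (continuousOn_const.mul (hw.continuousOn_radial ht))) fun r hr => (hL r hr).2.2.1
    continuousOn_p' := hw.continuousOn_liouvilleDeriv₂ hR ht
    continuousOn_f := continuousOn_rpow_sub_one_mul hq0 (hw_t.continuousOn_radial ht)
      fun r hr => (hL r hr).2.1
    contBddOn_q := .of_continuousOn_Icc <| continuousOn_rpow_sub_one_mul hq0
      ((continuousOn_id.mul (hw_rt.continuousOn_radial ht)).add
        (continuousOn_const.mul (hw_t.continuousOn_radial ht))) fun r hr => (hL r hr).2.2.2
    contBddOn_e_sq_div := contBddOn_liouvilleQuotient_sq_div hq (hw.continuousOn_radial ht)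
      fun r hr => (hL r hr).1
    hasDerivAt_u := fun r hr => hasDerivAt_mul_liouvilleQuotient hw hr ht
    hasDerivAt_p := fun r hr => hasDerivAt_liouvilleDeriv hR hw hr ht
    hasDerivAt_u_t := fun r hr => hasDerivAt_mul_liouvilleQuotient hw_t hr ht
    e_zero := by simp only [liouvilleQuotient, h.zero_left t ht, mul_zero]
    p_zero := by simp only [liouvilleDeriv, h.zero_left t ht, mul_zero, zero_mul, add_zero]
    e_right := by simp only [liouvilleQuotient, h.zero_right t ht, mul_zero]
    f_right := by simp only [liouvilleQuotient, timeDeriv_eq_zero ht h.zero_right, mul_zero]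
    sq_residual_le := fun r hr => liouville_sq_residual_le hr.1 hq0.le hC hc (hineq r hr) }

theorem exists_besselFlow (h : IsDirichletRadialHeat (2 * q) β R t₁ t₂ w) (hR : 0 < R)
    (hq : 1 / 2 ≤ q) (hc : 0 < q ^ 2 - q + β) (hτ₁ : t₁ < τ₁) (hτ₂ : τ₂ < t₂) :
    ∃ Λ ≥ 0, BesselFlow R (q ^ 2 - q + β) Λ τ₁ τ₂ (liouvilleQuotient q w) (liouvilleDeriv q R w)
      (liouvilleDeriv₂ q R w) (liouvilleQuotient q (timeDeriv w))
      (liouvilleDeriv q R (timeDeriv w)) := by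
  have hq0 : 0 < q := by linarith
  obtain ⟨C, hC⟩ := h.inequality τ₁ τ₂ hτ₁ hτ₂
  obtain ⟨L, hL⟩ := h.exists_abs_le_mul hR hτ₁ hτ₂ q
  have hw := h.smooth
  have hw_t := hw.timeDeriv hR
  have hsub : Ioo τ₁ τ₂ ⊆ Ioo t₁ t₂ := Ioo_subset_Ioo hτ₁.le hτ₂.le
  have hcont {f : ℝ → ℝ → ℝ} (hf : SmoothOnSlab R t₁ t₂ f) :
      ContinuousOn (fun x : ℝ × ℝ => f x.1 x.2) (Ioo 0 R ×ˢ Ioo τ₁ τ₂) :=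
    hf.continuousOn.mono (prod_mono Ioo_subset_Icc_self hsub)
  have hcont' {f : ℝ → ℝ → ℝ} (hf : SmoothOnSlab R t₁ t₂ f) :
      ContinuousOn (fun x : ℝ × ℝ => x.1 * radialDeriv R f x.1 x.2 + q * f x.1 x.2)
        (Ioo 0 R ×ˢ Ioo τ₁ τ₂) :=
    (continuousOn_fst.mul (hcont (hf.radialDeriv hR))).add (continuousOn_const.mul (hcont hf))
  have hbdd {g : ℝ × ℝ → ℝ} (hg : ContinuousOn g (Ioo 0 R ×ˢ Ioo τ₁ τ₂))
      (hgL : ∀ x ∈ Ioo 0 R ×ˢ Ioo τ₁ τ₂, |g x| ≤ L * x.1) :=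
    contBddOn_rpow_sub_one_mul hq0 continuousOn_fst hg (fun x hx => hx.1) hgL
  have hL' : ∀ x ∈ Ioo 0 R ×ˢ Ioo τ₁ τ₂, _ := fun x hx => hL x.2 hx.2 x.1 (Ioo_subset_Icc_self hx.1)
  refine ⟨|C| ^ 2 * (1 + (1 + q) ^ 2 / (q ^ 2 - q + β)), by positivity, ?_⟩
  exact
  { slice := fun t ht => h.besselSlice hR hq hc (abs_nonneg C) (hsub ht) (hL t ht) fun r hr =>
      (hC r hr t (Ioo_subset_Icc_self ht)).trans (mul_le_mul_of_nonneg_right (le_abs_self C)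
        (add_nonneg (div_nonneg (abs_nonneg _) hr.1.le) (abs_nonneg _)))
    hasDerivAt_e := fun r hr t ht =>
      hw.hasDerivAt_liouvilleQuotient_time (Ioo_subset_Icc_self hr) (hsub ht)
    hasDerivAt_p := fun r hr t ht =>
      hw.hasDerivAt_liouvilleDeriv_time hR (Ioo_subset_Icc_self hr) (hsub ht)
    contBddOn_e := hbdd (hcont hw) fun x hx => (hL' x hx).1
    contBddOn_p := hbdd (hcont' hw) fun x hx => (hL' x hx).2.2.1
    contBddOn_f := hbdd (hcont hw_t) fun x hx => (hL' x hx).2.1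
    contBddOn_q := hbdd (hcont' hw_t) fun x hx => (hL' x hx).2.2.2 }

theorem eq_zero_of_liouvilleQuotient_eq_zero (h : IsDirichletRadialHeat (2 * q) β R t₁ t₂ w)
    (ht : t ∈ Ioo t₁ t₂) (hr : 0 ≤ r) (hzero : liouvilleQuotient q w r t = 0) : w r t = 0 := by
  rcases hr.eq_or_lt with rfl | hr
  · exact h.zero_left t ht
  · exact (mul_eq_zero.1 hzero).resolve_left (Real.rpow_pos_of_pos hr _).ne'

theorem mul_liouvilleQuotient_flat {r₀ : ℝ} (hq : 0 < q)
    (hflat : ∀ k : ℕ, ∃ B, ∀ r ∈ Icc 0 R, |w r t| ≤ B * |r - r₀| ^ k) (k : ℕ) :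
    ∃ B, ∀ r ∈ Icc 0 R, |r * liouvilleQuotient q w r t| ≤ B * |r - r₀| ^ k := by
  obtain ⟨B, hB⟩ := hflat k
  refine ⟨R ^ q * B, fun r hr => ?_⟩
  have hu : r * liouvilleQuotient q w r t = r ^ q * w r t := by
    rcases hr.1.eq_or_lt with rfl | hr0
    · simp [Real.zero_rpow hq.ne']
    · rw [liouvilleQuotient, Real.rpow_sub_one hr0.ne']
      field_simp
  rw [hu, abs_mul, abs_of_nonneg (Real.rpow_nonneg hr.1 q), mul_assoc]
  exact mul_le_mul (Real.rpow_le_rpow hr.1 hr.2 hq.le) (hB r hr) (abs_nonneg _)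
    (Real.rpow_nonneg (hr.1.trans hr.2) q)

variable {μ s : ℝ}

theorem eq_zero_of_flat {r₀ : ℝ} (h : IsDirichletRadialHeat μ β R t₁ t₂ w) (hR : 0 < R)
    (hμ : 1 ≤ μ) (hβ : μ * (2 - μ) < 4 * β) (hr₀ : r₀ ∈ Icc 0 R) (ht : t ∈ Ioo t₁ t₂)
    (hflat : ∀ k : ℕ, ∃ B, ∀ r ∈ Icc 0 R, |w r t| ≤ B * |r - r₀| ^ k) (hs : s ∈ Ioo t₁ t) :
    ∀ r ∈ Icc 0 R, w r s = 0 := by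
  obtain ⟨q, rfl⟩ : ∃ q, μ = 2 * q := ⟨μ / 2, by ring⟩
  have hq : 1 / 2 ≤ q := by linarith
  have hc : 0 < q ^ 2 - q + β := by nlinarith
  obtain ⟨τ₁, hτ₁, hs₁⟩ := exists_between hs.1
  obtain ⟨τ₂, ht₂, hτ₂⟩ := exists_between ht.2
  obtain ⟨Λ, hΛ, hflow⟩ := h.exists_besselFlow hR hq hc hτ₁ hτ₂
  exact fun r hr => h.eq_zero_of_liouvilleQuotient_eq_zero ⟨hs.1, hs.2.trans ht.2⟩ hr.1
    (hflow.eq_zero_of_flat hR hc.le hΛ hr₀ hs₁ hs.2 ht₂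
      (mul_liouvilleQuotient_flat (by linarith) hflat) r hr)

theorem eq_zero_of_initial_eq_zero (h : IsDirichletRadialHeat μ β R t₁ t₂ w) (hR : 0 < R)
    (hμ : 1 ≤ μ) (hβ : μ * (2 - μ) < 4 * β) (hs : t₁ < s) (hst : s ≤ t) (ht : t < t₂)
    (hzero : ∀ r ∈ Icc 0 R, w r s = 0) : ∀ r ∈ Icc 0 R, w r t = 0 := by
  obtain ⟨q, rfl⟩ : ∃ q, μ = 2 * q := ⟨μ / 2, by ring⟩
  have hq : 1 / 2 ≤ q := by linarith
  have hc : 0 < q ^ 2 - q + β := by nlinarith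
  obtain ⟨τ₁, hτ₁, hs₁⟩ := exists_between hs
  obtain ⟨τ₂, ht₂, hτ₂⟩ := exists_between ht
  obtain ⟨Λ, hΛ, hflow⟩ := h.exists_besselFlow hR hq hc hτ₁ hτ₂
  exact fun r hr => h.eq_zero_of_liouvilleQuotient_eq_zero ⟨hs.trans_le hst, ht⟩ hr.1
    (hflow.eq_zero_of_initial_eq_zero hR hc.le hΛ hs₁ hst ht₂
      (fun x hx => by rw [liouvilleQuotient, hzero x hx, mul_zero]) r hr)

end IsDirichletRadialHeat

end LiouvilleFlow

section RadialHeatInequality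

variable {μ β R t₁ t₂ r t : ℝ} {v : ℝ → ℝ → ℝ}

open scoped Topology in
theorem SmoothOnSlab.radialDeriv_radialDeriv_eq_deriv (hv : SmoothOnSlab R t₁ t₂ v) (hR : 0 < R)
    (hr : r ∈ Ioo 0 R) (ht : t ∈ Ioo t₁ t₂) :
    radialDeriv R (radialDeriv R v) r t = deriv (deriv fun s => v s t) r := by
  have heq : deriv (fun s => v s t) =ᶠ[𝓝 r] fun s => radialDeriv R v s t := by
    filter_upwards [Ioo_mem_nhds hr.1 hr.2] with s hs using (radialDeriv_eq_deriv hs).symm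
  rw [heq.deriv_eq, ((hv.radialDeriv hR).hasDerivAt_radial hr ht).deriv]

theorem radialHeatInequality_of_heat_equation {b : ℝ → ℝ → ℝ} (hR : 0 < R)
    (hb : SmoothOnSlab R t₁ t₂ b) (hb0 : ∀ t ∈ Ioo t₁ t₂, b 0 t = β) (hv : SmoothOnSlab R t₁ t₂ v)
    (hpde : ∀ r ∈ Ioo 0 R, ∀ t ∈ Ioo t₁ t₂, deriv (fun s => v r s) t =
      deriv (deriv fun x => v x t) r + μ / r * deriv (fun x => v x t) r - b r t / r ^ 2 * v r t) :
    RadialHeatInequality μ β R t₁ t₂ v := fun τ₁ τ₂ hτ₁ hτ₂ => by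
  have hbβ : SmoothOnSlab R t₁ t₂ fun r t => b r t - β := hb.sub contDiffOn_const
  obtain ⟨K, hK⟩ := hbβ.exists_abs_le_mul hR hτ₁ hτ₂ fun t ht => sub_eq_zero.2 (hb0 t ht)
  refine ⟨|K|, fun r hr t ht => ?_⟩
  have ht' := Icc_subset_Ioo hτ₁ hτ₂ ht
  have hr0 : 0 < r := hr.1
  have hop : radialHeatOperator μ β R v r t = -((b r t - β) / r ^ 2 * v r t) := by
    rw [radialHeatOperator, timeDeriv, hpde r hr t ht',
      hv.radialDeriv_radialDeriv_eq_deriv hR hr ht', radialDeriv_eq_deriv hr]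
    ring
  rw [hop, abs_neg, abs_mul, abs_div, abs_of_pos (pow_pos hr0 2)]
  calc |b r t - β| / r ^ 2 * |v r t| ≤ K * r / r ^ 2 * |v r t| := by
        gcongr
        exact hK r (Ioo_subset_Icc_self hr) t ht
    _ = K * (|v r t| / r) := by field_simp
    _ ≤ |K| * (|v r t| / r + |radialDeriv R v r t|) := by
        gcongr
        exacts [le_abs_self K, le_add_of_nonneg_right (abs_nonneg _)]

theorem RadialHeatInequality.eq_zero_left (h : RadialHeatInequality μ β R t₁ t₂ v)
    (hv : SmoothOnSlab R t₁ t₂ v) (hR : 0 < R) (hβ : β ≠ 0) (ht : t ∈ Ioo t₁ t₂) : v 0 t = 0 := by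
  obtain ⟨τ₁, hτ₁, hτ₁t⟩ := exists_between ht.1
  obtain ⟨τ₂, htτ₂, hτ₂⟩ := exists_between ht.2
  obtain ⟨C, hC⟩ := h τ₁ τ₂ hτ₁ hτ₂
  have hv_r := hv.radialDeriv hR
  have hcleared : ∀ r ∈ Ioo 0 R,
      |r ^ 2 * (timeDeriv v r t - radialDeriv R (radialDeriv R v) r t) -
        μ * r * radialDeriv R v r t + β * v r t| ≤
      C * (r * |v r t| + r ^ 2 * |radialDeriv R v r t|) := fun r hr => by
    have hr0 : 0 < r := hr.1
    have hr2 : 0 < r ^ 2 := pow_pos hr0 2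
    calc _ = |r ^ 2 * radialHeatOperator μ β R v r t| := by
          rw [radialHeatOperator]
          congr 1
          field_simp
      _ ≤ r ^ 2 * (C * (|v r t| / r + |radialDeriv R v r t|)) := by
          rw [abs_mul, abs_of_pos hr2]
          exact mul_le_mul_of_nonneg_left (hC r hr t ⟨hτ₁t.le, htτ₂.le⟩) hr2.le
      _ = _ := by field_simp
  have hid : ContinuousOn (fun r : ℝ => r) (Icc 0 R) := continuousOn_id
  have hcont := hv.continuousOn_radial ht
  have hcont_r := hv_r.continuousOn_radial ht
  have hleft := (((hid.pow 2).mul (((hv.timeDeriv hR).continuousOn_radial ht).sub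
    ((hv_r.radialDeriv hR).continuousOn_radial ht))).sub
      ((continuousOn_const (c := μ)).mul hid |>.mul hcont_r)).add
    ((continuousOn_const (c := β)).mul hcont) |>.abs
  have hright := (continuousOn_const (c := C)).mul
    ((hid.mul hcont.abs).add ((hid.pow 2).mul hcont_r.abs))
  have hmem : (0 : ℝ) ∈ Icc 0 R := left_mem_Icc.2 hR.le
  have hzero := ContinuousWithinAt.closure_le (by rwa [closure_Ioo hR.ne])
    ((hleft 0 hmem).mono Ioo_subset_Icc_self) ((hright 0 hmem).mono Ioo_subset_Icc_self) hcleared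
  have hmul : |β * v 0 t| ≤ 0 := by simpa using hzero
  exact (mul_eq_zero.1 (abs_nonpos_iff.1 hmul)).resolve_left hβ

end RadialHeatInequality

section NonvanishingEndpoint

variable {μ β R t₁ t₂ τ₁ τ₂ r t : ℝ} {v : ℝ → ℝ → ℝ}

namespace SmoothOnSlab

theorem sub_radius_mul (hv : SmoothOnSlab R t₁ t₂ v) :
    SmoothOnSlab R t₁ t₂ fun r t => (R - r) * v r t :=
  (contDiff_const.sub contDiff_fst).contDiffOn.mul hv

theorem radialDeriv_sub_radius_mul (hv : SmoothOnSlab R t₁ t₂ v) (hR : 0 < R) (hr : r ∈ Icc 0 R)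
    (ht : t ∈ Ioo t₁ t₂) :
    radialDeriv R (fun r t => (R - r) * v r t) r t = -v r t + (R - r) * radialDeriv R v r t :=
  radialDeriv_eq_of_hasDerivWithinAt hR hr <|
    (((hasDerivWithinAt_id r _).const_sub R).mul (hv.hasDerivWithinAt hr ht)).congr_deriv (by simp)

theorem radialDeriv_radialDeriv_sub_radius_mul (hv : SmoothOnSlab R t₁ t₂ v) (hR : 0 < R)
    (hr : r ∈ Icc 0 R) (ht : t ∈ Ioo t₁ t₂) :
    radialDeriv R (radialDeriv R fun r t => (R - r) * v r t) r t =
      -2 * radialDeriv R v r t + (R - r) * radialDeriv R (radialDeriv R v) r t := by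
  rw [radialDeriv_congr (g := fun r t => -v r t + (R - r) * radialDeriv R v r t) hr
    fun s hs => hv.radialDeriv_sub_radius_mul hR hs ht]
  exact radialDeriv_eq_of_hasDerivWithinAt hR hr <| ((hv.hasDerivWithinAt hr ht).neg.add
    (((hasDerivWithinAt_id r _).const_sub R).mul
      ((hv.radialDeriv hR).hasDerivWithinAt hr ht))).congr_deriv (by simp; ring)

theorem radialHeatOperator_sub_radius_mul (hv : SmoothOnSlab R t₁ t₂ v) (hR : 0 < R)
    (hr : r ∈ Icc 0 R) (ht : t ∈ Ioo t₁ t₂) :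
    radialHeatOperator μ β R (fun r t => (R - r) * v r t) r t =
      (R - r) * radialHeatOperator μ β R v r t + (2 * radialDeriv R v r t + μ / r * v r t) := by
  have htime : timeDeriv (fun r t => (R - r) * v r t) r t = (R - r) * timeDeriv v r t :=
    ((hv.hasDerivAt_time hr ht).const_mul (R - r)).deriv
  rw [radialHeatOperator, htime, hv.radialDeriv_radialDeriv_sub_radius_mul hR hr ht,
    hv.radialDeriv_sub_radius_mul hR hr ht, radialHeatOperator]
  ring

end SmoothOnSlab

/-- Away from `r = R` the factor `R - r` can be divided out; near `r = R` the derivative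
`-x + (R - r) y` of `(R - r) x` is close to `-x`, hence bounded below. -/
theorem abs_div_add_abs_le_of_le_abs {x y c K : ℝ} (hr : r ∈ Ioo 0 R) (hc : 0 < c)
    (hx : |x| ≤ K * r) (hy : |y| ≤ K) (hlow : c ≤ |x| + K * (R - r)) :
    |x| / r + |y| ≤ 16 * K ^ 2 * R / c ^ 2 * (|(R - r) * x| / r + |-x + (R - r) * y|) := by
  have hr0 : 0 < r := hr.1
  have hs : 0 < R - r := sub_pos.2 hr.2
  have hK : 0 ≤ K := (abs_nonneg y).trans hy
  have hx_div : |x| / r ≤ K := (div_le_iff₀ hr0).2 hx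
  have hsy : (R - r) * |y| ≤ (R - r) * K := mul_le_mul_of_nonneg_left hy hs.le
  have hy_le : (R - r) * |y| ≤ |-x + (R - r) * y| + |x| := by
    simpa [abs_mul, abs_of_pos hs] using abs_sub (-x + (R - r) * y) (-x)
  have hx_le : |x| ≤ |-x + (R - r) * y| + (R - r) * |y| := by
    simpa [abs_mul, abs_of_pos hs] using abs_sub (-x + (R - r) * y) ((R - r) * y)
  have hw_le : |-x + (R - r) * y| ≤ |x| + (R - r) * |y| := by
    simpa [abs_mul, abs_of_pos hs] using abs_add_le (-x) ((R - r) * y)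
  have hw := abs_nonneg (-x + (R - r) * y)
  rw [abs_mul, abs_of_pos hs, mul_div_assoc (R - r)]
  set w' := |-x + (R - r) * y|
  set X := (R - r) * (|x| / r) + w'
  set Y := |x| / r + |y|
  have hA : 0 ≤ |x| / r := by positivity
  have hX0 : 0 ≤ X := by positivity
  have hY0 : 0 ≤ Y := by positivity
  have hrA : r * (|x| / r) = |x| := mul_div_cancel₀ _ hr0.ne'
  have hYK : Y ≤ 2 * K := by linarith
  have hXK : X ≤ 2 * K * R := by nlinarith
  have hfar : (R - r) ^ 2 * Y ≤ R * X := by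
    nlinarith [mul_le_mul_of_nonneg_left hy_le hs.le]
  have hnear : c ≤ X + 2 * K * (R - r) := by nlinarith
  have hc_sq : c ^ 2 ≤ 2 * X ^ 2 + 8 * K ^ 2 * (R - r) ^ 2 := by
    nlinarith [pow_le_pow_left₀ hc.le hnear 2, sq_nonneg (X - 2 * K * (R - r))]
  rw [div_mul_eq_mul_div, le_div_iff₀ (pow_pos hc 2)]
  calc Y * c ^ 2 ≤ Y * (2 * X ^ 2 + 8 * K ^ 2 * (R - r) ^ 2) :=
        mul_le_mul_of_nonneg_left hc_sq hY0
    _ = 2 * Y * X * X + 8 * K ^ 2 * ((R - r) ^ 2 * Y) := by ring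
    _ ≤ 2 * (2 * K) * (2 * K * R) * X + 8 * K ^ 2 * (R * X) :=
        add_le_add (mul_le_mul_of_nonneg_right
          (mul_le_mul (mul_le_mul_of_nonneg_left hYK zero_le_two) hXK hX0 (by positivity)) hX0)
          (mul_le_mul_of_nonneg_left hfar (by positivity))
    _ = 16 * K ^ 2 * R * X := by ring

namespace SmoothOnSlab

theorem exists_abs_div_add_abs_le (hv : SmoothOnSlab R t₁ t₂ v) (hR : 0 < R)
    (hv0 : ∀ t ∈ Ioo t₁ t₂, v 0 t = 0) (hvR : ∀ t ∈ Ioo t₁ t₂, v R t ≠ 0) (hτ₁ : t₁ < τ₁)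
    (hτ₂ : τ₂ < t₂) :
    ∃ D, ∀ r ∈ Ioo 0 R, ∀ t ∈ Icc τ₁ τ₂, |v r t| / r + |radialDeriv R v r t| ≤
      D * (|(R - r) * v r t| / r + |-v r t + (R - r) * radialDeriv R v r t|) := by
  have hsub := Icc_subset_Ioo hτ₁ hτ₂
  have hmem : R ∈ Icc 0 R := right_mem_Icc.2 hR.le
  obtain ⟨K, hK⟩ := (hv.radialDeriv hR).exists_abs_le hτ₁ hτ₂
  obtain ⟨c, hc, hlow⟩ := isCompact_Icc.exists_forall_le'
    ((hv.continuousOn_time hmem).mono hsub).abs fun t ht => abs_pos.2 (hvR t (hsub ht))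
  refine ⟨16 * K ^ 2 * R / c ^ 2, fun r hr t ht => ?_⟩
  have hr' := Ioo_subset_Icc_self hr
  have hdiff {s : ℝ} (hs : s ∈ Icc 0 R) : |v s t - v r t| ≤ K * |s - r| :=
    hv.abs_sub_le (hsub ht) (fun x hx => hK x hx t ht) hr' hs
  refine abs_div_add_abs_le_of_le_abs hr hc ?_ (hK r hr' t ht) ?_
  · simpa [hv0 t (hsub ht), abs_of_pos hr.1] using hdiff (left_mem_Icc.2 hR.le)
  · have hRr := hdiff hmem
    rw [abs_of_pos (sub_pos.2 hr.2)] at hRr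
    linarith [hlow t ht, abs_sub_abs_le_abs_sub (v R t) (v r t)]

end SmoothOnSlab

theorem RadialHeatInequality.sub_radius_mul (h : RadialHeatInequality μ β R t₁ t₂ v) (hR : 0 < R)
    (hv : SmoothOnSlab R t₁ t₂ v) (hv0 : ∀ t ∈ Ioo t₁ t₂, v 0 t = 0)
    (hvR : ∀ t ∈ Ioo t₁ t₂, v R t ≠ 0) :
    RadialHeatInequality μ β R t₁ t₂ fun r t => (R - r) * v r t := fun τ₁ τ₂ hτ₁ hτ₂ => by
  obtain ⟨C, hC⟩ := h τ₁ τ₂ hτ₁ hτ₂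
  obtain ⟨D, hD⟩ := hv.exists_abs_div_add_abs_le hR hv0 hvR hτ₁ hτ₂
  refine ⟨(R * |C| + (2 + |μ|)) * D, fun r hr t ht => ?_⟩
  have hr0 : 0 < r := hr.1
  have hs : 0 < R - r := sub_pos.2 hr.2
  have hr' := Ioo_subset_Icc_self hr
  have ht' := Icc_subset_Ioo hτ₁ hτ₂ ht
  rw [hv.radialHeatOperator_sub_radius_mul hR hr' ht', hv.radialDeriv_sub_radius_mul hR hr' ht']
  have hlower : |2 * radialDeriv R v r t + μ / r * v r t| ≤
      (2 + |μ|) * (|v r t| / r + |radialDeriv R v r t|) := by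
    refine (abs_add_le _ _).trans ?_
    rw [abs_mul, abs_mul, abs_div, abs_of_pos hr0, abs_two, div_mul_eq_mul_div, mul_div_assoc]
    have hv_div : 0 ≤ |v r t| / r := by positivity
    nlinarith [mul_nonneg (abs_nonneg μ) (abs_nonneg (radialDeriv R v r t))]
  have hop : |(R - r) * radialHeatOperator μ β R v r t| ≤
      R * |C| * (|v r t| / r + |radialDeriv R v r t|) := by
    rw [abs_mul, abs_of_pos hs, mul_assoc]
    gcongr
    · linarith
    · exact (hC r hr t ht).trans (by gcongr; exact le_abs_self C)
  calc _ ≤ R * |C| * (|v r t| / r + |radialDeriv R v r t|) +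
        (2 + |μ|) * (|v r t| / r + |radialDeriv R v r t|) :=
        (abs_add_le _ _).trans (add_le_add hop hlower)
    _ = (R * |C| + (2 + |μ|)) * (|v r t| / r + |radialDeriv R v r t|) := by ring
    _ ≤ (R * |C| + (2 + |μ|)) *
          (D * (|(R - r) * v r t| / r + |-v r t + (R - r) * radialDeriv R v r t|)) := by
        gcongr
        exact hD r hr t ht
    _ = _ := (mul_assoc _ _ _).symm

end NonvanishingEndpoint

section ZeroNumber

variable {μ β R t₁ t₂ t : ℝ} {v : ℝ → ℝ → ℝ}

theorem exists_forall_abs_le_mul_pow_of_infinite_zeros {φ : ℝ → ℝ} {a b : ℝ} (hab : a < b)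
    (hφ : ContDiffOn ℝ (⊤ : ℕ∞) φ (Icc a b)) (hinf : {x ∈ Icc a b | φ x = 0}.Infinite) :
    ∃ x₀ ∈ Icc a b, ∀ k : ℕ, ∃ B, ∀ x ∈ Icc a b, |φ x| ≤ B * |x - x₀| ^ k := by
  obtain ⟨x₀, hx₀, hacc⟩ :=
    hinf.exists_accPt_of_subset_isCompact isCompact_Icc fun x hx => hx.1
  exact ⟨x₀, hx₀, exists_abs_le_mul_pow hab hφ hx₀ hacc⟩

theorem IsDirichletRadialHeat.eq_zero_of_exists_flat {w : ℝ → ℝ → ℝ} {r₀ : ℝ}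
    (h : IsDirichletRadialHeat μ β R t₁ t₂ w) (hR : 0 < R) (hμ : 1 ≤ μ)
    (hβ : μ * (2 - μ) < 4 * β) (hr₀ : r₀ ∈ Icc 0 R) (ht : t ∈ Ioo t₁ t₂)
    (hflat : ∀ k : ℕ, ∃ B, ∀ r ∈ Icc 0 R, |w r t| ≤ B * |r - r₀| ^ k) :
    ∀ s ∈ Ioo t₁ t₂, ∀ r ∈ Icc 0 R, w r s = 0 := fun s hs => by
  rcases lt_or_ge s t with hst | hts
  · exact h.eq_zero_of_flat hR hμ hβ hr₀ ht hflat ⟨hs.1, hst⟩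
  · obtain ⟨s₀, hs₀, hs₀t⟩ := exists_between ht.1
    exact h.eq_zero_of_initial_eq_zero hR hμ hβ hs₀ (hs₀t.le.trans hts) hs.2
      (h.eq_zero_of_flat hR hμ hβ hr₀ ht hflat ⟨hs₀, hs₀t⟩)

theorem SmoothOnSlab.eq_zero_right_of_sub_radius_mul_eq_zero (hv : SmoothOnSlab R t₁ t₂ v)
    (hR : 0 < R) (ht : t ∈ Ioo t₁ t₂) (h : ∀ r ∈ Icc 0 R, (R - r) * v r t = 0) : v R t = 0 := by
  have hzero : EqOn (fun r => v r t) (fun _ => 0) (Ioo 0 R) := fun r hr =>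
    (mul_eq_zero.1 (h r (Ioo_subset_Icc_self hr))).resolve_left (sub_pos.2 hr.2).ne'
  exact hzero.of_subset_closure (hv.continuousOn_radial ht) continuousOn_const Ioo_subset_Icc_self
    (closure_Ioo hR.ne).ge (right_mem_Icc.2 hR.le)

theorem zero_number_finite_general (hμ : 1 ≤ μ) (hβ : μ * (2 - μ) < 4 * β) (hβ0 : β ≠ 0)
    (hR : 0 < R) (hv : SmoothOnSlab R t₁ t₂ v) (h : RadialHeatInequality μ β R t₁ t₂ v)
    (hbcR : (∀ t ∈ Ioo t₁ t₂, v R t = 0) ∨ (∀ t ∈ Ioo t₁ t₂, v R t ≠ 0))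
    (hnz : ¬ ∀ r ∈ Icc 0 R, ∀ t ∈ Ioo t₁ t₂, v r t = 0) :
    ∀ t ∈ Ioo t₁ t₂, {r ∈ Icc 0 R | v r t = 0}.Finite := by
  intro t ht
  by_contra hinf
  obtain ⟨r₀, hr₀, hflat⟩ :=
    exists_forall_abs_le_mul_pow_of_infinite_zeros hR (hv.contDiffOn_radial ht) hinf
  have hv0 : ∀ t ∈ Ioo t₁ t₂, v 0 t = 0 := fun t ht => h.eq_zero_left hv hR hβ0 ht
  rcases hbcR with hvR | hvR
  · have hdir : IsDirichletRadialHeat μ β R t₁ t₂ v := ⟨hv, h, hv0, hvR⟩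
    exact hnz fun r hr s hs => hdir.eq_zero_of_exists_flat hR hμ hβ hr₀ ht hflat s hs r hr
  · have hdir : IsDirichletRadialHeat μ β R t₁ t₂ fun r t => (R - r) * v r t :=
      ⟨hv.sub_radius_mul, h.sub_radius_mul hR hv hv0 hvR, fun t ht => by simp [hv0 t ht], by simp⟩
    have hflat' : ∀ k : ℕ, ∃ B, ∀ r ∈ Icc 0 R, |(R - r) * v r t| ≤ B * |r - r₀| ^ k := fun k => by
      obtain ⟨B, hB⟩ := hflat k
      refine ⟨R * B, fun r hr => ?_⟩
      rw [abs_mul, abs_of_nonneg (sub_nonneg.2 hr.2), mul_assoc]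
      exact mul_le_mul (sub_le_self R hr.1) (hB r hr) (abs_nonneg _) hR.le
    exact hvR t ht <| hv.eq_zero_right_of_sub_radius_mul_eq_zero hR ht <|
      hdir.eq_zero_of_exists_flat hR hμ hβ hr₀ ht hflat' t ht

end ZeroNumber

theorem zero_number_finite
    (m : ℕ) (hm : 2 ≤ m) (R t1 t2 : ℝ) (hR : 0 < R) (ht12 : t1 < t2)
    (b v : ℝ → ℝ → ℝ)
    (hb_smooth : ContDiffOn ℝ (⊤ : ℕ∞) (fun p : ℝ × ℝ => b p.1 p.2) (Icc 0 R ×ˢ Ioo t1 t2))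
    (hb_bdd : ∃ C : ℝ, ∀ r ∈ Icc (0:ℝ) R, ∀ t ∈ Ioo t1 t2, |b r t| ≤ C)
    (hb0 : ∀ t ∈ Ioo t1 t2, b 0 t = (m : ℝ) - 1)
    (hbr0 : ∀ t ∈ Ioo t1 t2, deriv (fun x => b x t) 0 = 0)
    (hv_smooth : ContDiffOn ℝ (⊤ : ℕ∞) (fun p : ℝ × ℝ => v p.1 p.2) (Icc 0 R ×ˢ Ioo t1 t2))
    (hpde : ∀ r ∈ Ioo (0:ℝ) R, ∀ t ∈ Ioo t1 t2,
      deriv (fun s => v r s) t =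
        deriv (deriv (fun x => v x t)) r + (((m : ℝ) - 1) / r) * deriv (fun x => v x t) r
          - (b r t / r ^ 2) * v r t)
    (hbc0 : (∀ t ∈ Ioo t1 t2, v 0 t = 0) ∨ (∀ t ∈ Ioo t1 t2, v 0 t ≠ 0))
    (hbcR : (∀ t ∈ Ioo t1 t2, v R t = 0) ∨ (∀ t ∈ Ioo t1 t2, v R t ≠ 0))
    (hnz : ¬ ∀ r ∈ Icc (0:ℝ) R, ∀ t ∈ Ioo t1 t2, v r t = 0)
    :
    ∀ t ∈ Ioo t1 t2, {r ∈ Icc (0:ℝ) R | v r t = 0}.Finite := by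
  have hm' : (2 : ℝ) ≤ m := by exact_mod_cast hm
  have hv := radialHeatInequality_of_heat_equation hR hb_smooth hb0 hv_smooth hpde
  exact zero_number_finite_general (by linarith) (by nlinarith) (by linarith) hR hv_smooth hv
    hbcR hnz
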